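/- arXiv:1905.09999 — 3 statements merged into one kernel-verified Lean document; each statement's English description precedes it below -/
import Mathlib

section
/- Let f : [−1, 1] → ℝ be continuous and suppose there exists δ > 0 such that f is nonincreasing on [−1, −1+δ] and nonincreasing on [1−δ, 1]. Let u ∈ L_{2s} ∩ C^{1,1}_loc(ℝ^n) satisfy (-Δ)^s u(x) = f(u(x)) for all x ∈ ℝ^n, |u(x)| ≤ 1 for all x ∈ ℝ^n, and u(x', x_n) → ±1 as x_n → ±∞, uniformly in x' ∈ ℝ^{n−1}. Then u is strictly increasing with respect to x_n: for every τ > 0 and every x = (x', x_n) ∈ ℝ^n, u(x', x_n + τ) > u(x', x_n). -/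
open MeasureTheory Filter Metric Set

noncomputable section

/-- Points of ℝⁿ with the Euclidean norm. -/
abbrev Pt (n : ℕ) := EuclideanSpace ℝ (Fin n)

/-- The space `L_{2s}`: locally integrable functions `u` with
`∫ |u(x)|/(1+|x|^{n+2s}) dx < ∞`. -/
def MemL2s (n : ℕ) (s : ℝ) (u : Pt n → ℝ) : Prop :=
  LocallyIntegrable u volume ∧
    Integrable (fun x : Pt n => |u x| / (1 + ‖x‖ ^ ((n : ℝ) + 2 * s))) volume

/-- `u` is locally `C^{1,1}` on the open set `D`. -/
def C11loc (n : ℕ) (u : Pt n → ℝ) (D : Set (Pt n)) : Prop :=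
  ∀ x ∈ D, ∃ ε > 0, ball x ε ⊆ D ∧ DifferentiableOn ℝ u (ball x ε) ∧
    ∃ K : NNReal, LipschitzOnWith K (fun y => fderivWithin ℝ u (ball x ε) y) (ball x ε)

/-- `(-Δ)^s u (x) = L`, with the principal value defined as the limit, as `ε → 0⁺`, of
`C_{n,s} ∫_{ℝⁿ \ B_ε(x)} (u(x) - u(y))/|x-y|^{n+2s} dy`. -/
def HasFracLap (n : ℕ) (s Cns : ℝ) (u : Pt n → ℝ) (x : Pt n) (L : ℝ) : Prop :=
  Tendsto (fun ε : ℝ =>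
      Cns * ∫ y in {y : Pt n | ε ≤ dist x y}, (u x - u y) / dist x y ^ ((n : ℝ) + 2 * s))
    (nhdsWithin 0 (Set.Ioi 0)) (nhds L)

/-- The index of the last coordinate (`x_n`). -/
def lastIdx (n : ℕ) (hn : 0 < n) : Fin n := ⟨n - 1, Nat.sub_lt hn Nat.one_pos⟩

/-- The unit vector `e_n` in the `x_n` direction. -/
def eN (n : ℕ) (hn : 0 < n) : Pt n := EuclideanSpace.single (lastIdx n hn) 1

lemma kern_integrable (n : ℕ) (hn : 0 < n) (s : ℝ) (hs : s ∈ Set.Ioo (0 : ℝ) 1) :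
    Integrable (fun z : Pt n => min (‖z‖ ^ 2) 1 / ‖z‖ ^ ((n : ℝ) + 2 * s)) volume := by
  have : Nonempty (Fin n) := ⟨⟨0, hn⟩⟩
  have : Nontrivial (Pt n) := inferInstance
  rw [integrable_fun_norm_addHaar (E := Pt n) volume
    (f := fun r : ℝ => min (r ^ 2) 1 / r ^ ((n : ℝ) + 2 * s))]
  obtain ⟨h0, h1⟩ := hs
  have hfr : Module.finrank ℝ (Pt n) = n := by simp
  rw [hfr]
  have hcast : ((n - 1 : ℕ) : ℝ) = (n : ℝ) - 1 := by
    rw [Nat.cast_sub hn]; simp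
  rw [← Ioc_union_Ioi_eq_Ioi (zero_le_one' ℝ), integrableOn_union]
  constructor
  · have : IntegrableOn (fun r : ℝ => r ^ (1 - 2 * s)) (Ioc 0 1) volume := by
      rw [← intervalIntegrable_iff_integrableOn_Ioc_of_le zero_le_one]
      exact intervalIntegral.intervalIntegrable_rpow' (by linarith)
    refine this.congr_fun ?_ measurableSet_Ioc
    rintro r ⟨hr0, hr1⟩
    have hm : min (r ^ 2) 1 = r ^ (2 : ℝ) := by
      rw [min_eq_left (by nlinarith)]; norm_cast
    simp only [smul_eq_mul]
    rw [hm, ← Real.rpow_natCast, hcast, ← Real.rpow_sub hr0, ← Real.rpow_add hr0]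
    congr 1; ring
  · have : IntegrableOn (fun r : ℝ => r ^ (-1 - 2 * s)) (Ioi 1) volume :=
      integrableOn_Ioi_rpow_of_lt (by linarith) zero_lt_one
    refine this.congr_fun ?_ measurableSet_Ioi
    intro r hr
    have hr : 1 < r := hr
    have hr0 : 0 < r := by linarith
    have hm : min (r ^ 2) 1 = r ^ (0 : ℝ) := by
      rw [min_eq_right (by nlinarith)]; simp
    simp only [smul_eq_mul]
    rw [hm, ← Real.rpow_natCast, hcast, ← Real.rpow_sub hr0, ← Real.rpow_add hr0]
    congr 1; ring

lemma shell_meas (n : ℕ) (ε : ℝ) : MeasurableSet {z : Pt n | ε ≤ ‖z‖} :=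
  measurableSet_le measurable_const measurable_norm

lemma shell_integrable (n : ℕ) (hn : 0 < n) (s : ℝ) (hs : s ∈ Set.Ioo (0 : ℝ) 1)
    (F : Pt n → ℝ) (hF : Measurable F) (B : ℝ) (hB : ∀ z, |F z| ≤ B) (ε : ℝ) (hε : 0 < ε) :
    IntegrableOn (fun z : Pt n => F z / ‖z‖ ^ ((n : ℝ) + 2 * s)) {z : Pt n | ε ≤ ‖z‖} volume := by
  have hB0 : 0 ≤ B := (abs_nonneg _).trans (hB 0)
  have hmin : 0 < min (ε ^ 2) 1 := by positivity
  have h := ((kern_integrable n hn s hs).const_mul (B / min (ε ^ 2) 1)).integrableOn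
    (s := {z : Pt n | ε ≤ ‖z‖})
  refine Integrable.mono' h ?_ ?_
  · exact (hF.div (measurable_norm.pow_const _)).aestronglyMeasurable
  · refine (ae_restrict_iff' (shell_meas n ε)).2 (Eventually.of_forall ?_)
    intro z hz
    have hz : ε ≤ ‖z‖ := hz
    have hp : 0 < ‖z‖ ^ ((n : ℝ) + 2 * s) := Real.rpow_pos_of_pos (by linarith) _
    rw [Real.norm_eq_abs, abs_div, abs_of_pos hp, ← mul_div_assoc]
    gcongr
    have h1 : min (ε ^ 2) 1 ≤ min (‖z‖ ^ 2) 1 := by gcongr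
    calc |F z| ≤ B := hB z
      _ = B / min (ε ^ 2) 1 * min (ε ^ 2) 1 := by field_simp
      _ ≤ _ := by gcongr

/-- truncated linear function -/
def oddT (n : ℕ) (q z : Pt n) : ℝ := if ‖z‖ < 1 then 2 * inner ℝ q z else 0

lemma oddT_meas (n : ℕ) (q : Pt n) : Measurable (oddT n q) := by
  unfold oddT
  refine Measurable.ite (measurableSet_lt measurable_norm measurable_const) ?_ measurable_const
  fun_prop

lemma oddT_bound (n : ℕ) (q z : Pt n) : |oddT n q z| ≤ 2 * ‖q‖ := by
  unfold oddT
  split_ifs with h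
  · rw [abs_mul, abs_two]
    have := abs_real_inner_le_norm q z
    have h2 : ‖q‖ * ‖z‖ ≤ ‖q‖ * 1 := by gcongr
    linarith
  · simp

lemma oddT_integral (n : ℕ) (p : ℝ) (q : Pt n) (ε : ℝ) :
    ∫ z in {z : Pt n | ε ≤ ‖z‖}, oddT n q z / ‖z‖ ^ p = 0 := by
  rw [← integral_indicator (shell_meas n ε)]
  set G : Pt n → ℝ := indicator {z : Pt n | ε ≤ ‖z‖} (fun z => oddT n q z / ‖z‖ ^ p) with hG
  have h1 := integral_neg_eq_self G (volume : Measure (Pt n))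
  have h2 : ∀ z, G (-z) = - G z := by
    intro z
    simp only [hG, indicator, mem_ofPred_eq, norm_neg, oddT, inner_neg_right]
    split_ifs <;> ring
  simp only [h2, integral_neg] at h1
  linarith

lemma key_abs (n : ℕ) (hn : 0 < n) (s : ℝ) (hs : s ∈ Set.Ioo (0 : ℝ) 1) :
    ∃ K : ℝ, 0 ≤ K ∧ ∀ (w : Pt n → ℝ) (g : Pt n → ℝ), Continuous w → (∀ x, |w x| ≤ 2) →
      (∀ x, Tendsto (fun ε : ℝ => ∫ z in {z : Pt n | ε ≤ ‖z‖},
        (w x - w (x + z)) / ‖z‖ ^ ((n : ℝ) + 2 * s)) (nhdsWithin 0 (Set.Ioi 0)) (nhds (g x))) →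
      ∀ (m ε : ℝ) (x0 : Pt n), 0 < ε → (∀ x, -m ≤ w x) → w x0 < -m + ε →
      ∃ y, ‖y - x0‖ ≤ 1 ∧ w y ≤ -m + ε ∧ ∀ (c : Pt n) (ρ R : ℝ), 0 < ρ → ρ < ‖c‖ →
        ‖c‖ + ρ ≤ R →
        ∫ z in ball c ρ, w (y + z) ≤
          (-m + 3 * ε) * volume.real (ball (0 : Pt n) ρ) +
            R ^ ((n : ℝ) + 2 * s) * (- g y + 2 * ε * K) := by
  set p : ℝ := (n : ℝ) + 2 * s with hp
  have hp0 : 0 < p := by have := hs.1; positivity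
  refine ⟨∫ z : Pt n, min (‖z‖ ^ 2) 1 / ‖z‖ ^ p, integral_nonneg fun z => by positivity, ?_⟩
  set K := ∫ z : Pt n, min (‖z‖ ^ 2) 1 / ‖z‖ ^ p with hK
  intro w g hw hw2 hlap m ε x0 hε hm hx0
  set η : Pt n → ℝ := fun x => max 0 (1 - ‖x - x0‖ ^ 2) with hη
  have hηc : Continuous η := by fun_prop
  have hη0 : ∀ x, 0 ≤ η x := fun x => le_max_left _ _
  have hη1 : ∀ x, η x ≤ 1 := fun x => max_le zero_le_one (by nlinarith [sq_nonneg ‖x - x0‖])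
  obtain ⟨y, hyB, hymin⟩ := (isCompact_closedBall x0 1).exists_isMinOn
    ⟨x0, mem_closedBall_self zero_le_one⟩ (f := fun x => w x - 2 * ε * η x) (by fun_prop)
  have hyB' : ‖y - x0‖ ≤ 1 := by rwa [mem_closedBall, dist_eq_norm] at hyB
  have hηx0 : η x0 = 1 := by simp [hη]
  have hy0 : w y - 2 * ε * η y ≤ w x0 - 2 * ε := by
    have := hymin (mem_closedBall_self zero_le_one : x0 ∈ closedBall x0 1)
    simp only [mem_ofPred_eq, hηx0] at this
    linarith
  have hglob : ∀ x, w y - 2 * ε * η y ≤ w x - 2 * ε * η x := by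
    intro x
    by_cases hx : x ∈ closedBall x0 1
    · exact hymin hx
    · rw [mem_closedBall, dist_eq_norm, not_le] at hx
      have : η x = 0 := max_eq_left (by nlinarith)
      rw [this]
      have := hm x
      linarith
  have hwy : w y ≤ -m + ε := by nlinarith [hη1 y]
  refine ⟨y, hyB', hwy, ?_⟩
  set q := y - x0 with hq
  have hηy : η y = 1 - ‖q‖ ^ 2 := max_eq_right (by nlinarith [norm_nonneg q])
  have hηd : ∀ z, η y - η (y + z) ≤ oddT n q z + min (‖z‖ ^ 2) 1 := by
    intro z
    unfold oddT
    split_ifs with hz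
    · have h1 : 1 - ‖q + z‖ ^ 2 ≤ η (y + z) := by
        have : q + z = y + z - x0 := by rw [hq]; abel
        rw [this]; exact le_max_right _ _
      rw [min_eq_left (by nlinarith [norm_nonneg z])]
      rw [norm_add_sq_real] at h1
      linarith
    · rw [min_eq_right (by nlinarith [norm_nonneg z])]
      linarith [hη1 y, hη0 (y + z)]
  set Φ : Pt n → ℝ := fun z => (-(w y - w (y + z))) + 2 * ε * (oddT n q z + min (‖z‖ ^ 2) 1) with hΦ
  have hΦ1 : ∀ z, -(w y - w (y + z)) + 2 * ε * (η y - η (y + z)) ≤ Φ z := by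
    intro z
    have := mul_le_mul_of_nonneg_left (hηd z) (by positivity : 0 ≤ 2 * ε)
    simp only [hΦ]; linarith
  have hΦ0 : ∀ z, 0 ≤ Φ z := fun z => le_trans (by linarith [hglob (y + z)]) (hΦ1 z)
  have hΦ2 : ∀ z, w (y + z) + m - 3 * ε ≤ Φ z := by
    intro z
    refine le_trans ?_ (hΦ1 z)
    have : -1 ≤ η y - η (y + z) := by linarith [hη0 y, hη1 (y + z)]
    nlinarith
  have hΦm : Measurable Φ := by
    have := oddT_meas n q
    have := hw.measurable
    simp only [hΦ]
    fun_prop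
  have hΦb : ∀ z, |Φ z| ≤ 4 + 2 * ε * (2 * ‖q‖ + 1) := by
    intro z
    have h1 := abs_le.1 (oddT_bound n q z)
    have h2 := abs_le.1 (hw2 y)
    have h3 := abs_le.1 (hw2 (y + z))
    have h4 : min (‖z‖ ^ 2) 1 ≤ 1 := min_le_right _ _
    rw [abs_of_nonneg (hΦ0 z)]
    simp only [hΦ]
    have := mul_le_mul_of_nonneg_left (add_le_add h1.2 h4) (by positivity : 0 ≤ 2 * ε)
    linarith
  intro c ρ R hρ hρc hcR
  have hR : 0 < R := by linarith
  have hRp : 0 < R ^ p := Real.rpow_pos_of_pos hR _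
  set V := volume.real (ball (0 : Pt n) ρ) with hV
  have hVc : volume.real (ball c ρ) = V := Measure.addHaar_real_ball_center _ _ _
  have hballn : ∀ z ∈ ball c ρ, ‖c‖ - ρ ≤ ‖z‖ ∧ ‖z‖ ≤ R := by
    intro z hz
    rw [mem_ball, dist_eq_norm] at hz
    have h1 : ‖c‖ ≤ ‖z‖ + ‖z - c‖ := by
      rw [← norm_neg (z - c)]; refine le_trans (le_of_eq ?_) (norm_add_le _ _); congr 1; abel
    have h2 : ‖z‖ ≤ ‖c‖ + ‖z - c‖ := by
      refine le_trans (le_of_eq ?_) (norm_add_le _ _); congr 1; abel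
    constructor <;> linarith
  have hfin : volume (ball c ρ) ≠ ⊤ := measure_ball_lt_top.ne
  have hwint : IntegrableOn (fun z => w (y + z)) (ball c ρ) volume :=
    ((hw.comp (continuous_const.add continuous_id)).continuousOn.integrableOn_compact
      (isCompact_closedBall c ρ)).mono_set ball_subset_closedBall
  -- the main inequality at level ε'
  have hmain : ∀ ε' ∈ Ioo (0:ℝ) (‖c‖ - ρ),
      (∫ z in ball c ρ, w (y + z)) + (m - 3 * ε) * V ≤
      R ^ p * (-(∫ z in {z : Pt n | ε' ≤ ‖z‖}, (w y - w (y + z)) / ‖z‖ ^ p) + 2 * ε * K) := by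
    rintro ε' ⟨hε0, hε1⟩
    have hi1 : IntegrableOn (fun z : Pt n => Φ z / ‖z‖ ^ p) {z : Pt n | ε' ≤ ‖z‖} volume :=
      shell_integrable n hn s hs Φ hΦm _ hΦb ε' hε0
    have hi2 : IntegrableOn (fun z : Pt n => (w y - w (y + z)) / ‖z‖ ^ p)
        {z : Pt n | ε' ≤ ‖z‖} volume := by
      refine shell_integrable n hn s hs (fun z => w y - w (y + z)) (by
        have := hw.measurable; fun_prop) 4 ?_ ε' hε0
      intro z
      have h2 := abs_le.1 (hw2 y)
      have h3 := abs_le.1 (hw2 (y + z))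
      rw [abs_le]; constructor <;> linarith
    have hi3 : IntegrableOn (fun z : Pt n => oddT n q z / ‖z‖ ^ p) {z : Pt n | ε' ≤ ‖z‖} volume :=
      shell_integrable n hn s hs _ (oddT_meas n q) _ (oddT_bound n q) ε' hε0
    have hi4' := kern_integrable n hn s hs
    have hi4 : IntegrableOn (fun z : Pt n => min (‖z‖ ^ 2) 1 / ‖z‖ ^ p)
      {z : Pt n | ε' ≤ ‖z‖} volume := hi4'.integrableOn
    have e1 : ∫ z in {z : Pt n | ε' ≤ ‖z‖}, Φ z / ‖z‖ ^ p
        = -(∫ z in {z : Pt n | ε' ≤ ‖z‖}, (w y - w (y + z)) / ‖z‖ ^ p)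
          + 2 * ε * (∫ z in {z : Pt n | ε' ≤ ‖z‖}, min (‖z‖ ^ 2) 1 / ‖z‖ ^ p) := by
      have : ∀ z : Pt n, Φ z / ‖z‖ ^ p = -((w y - w (y + z)) / ‖z‖ ^ p) +
          2 * ε * (oddT n q z / ‖z‖ ^ p + min (‖z‖ ^ 2) 1 / ‖z‖ ^ p) := by
        intro z; simp only [hΦ]; ring
      simp only [this]
      have hi5 : IntegrableOn (fun z : Pt n => -((w y - w (y + z)) / ‖z‖ ^ p))
        {z : Pt n | ε' ≤ ‖z‖} volume := hi2.neg
      have hi6 : IntegrableOn (fun z : Pt n => 2 * ε * (oddT n q z / ‖z‖ ^ p +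
        min (‖z‖ ^ 2) 1 / ‖z‖ ^ p)) {z : Pt n | ε' ≤ ‖z‖} volume := (hi3.add hi4).const_mul _
      rw [integral_add hi5 hi6, integral_neg, integral_const_mul,
        integral_add hi3 hi4, oddT_integral, zero_add]
    have e2 : ∫ z in {z : Pt n | ε' ≤ ‖z‖}, min (‖z‖ ^ 2) 1 / ‖z‖ ^ p ≤ K :=
      setIntegral_le_integral hi4' (Eventually.of_forall fun z => by positivity)
    have hsub : ball c ρ ⊆ {z : Pt n | ε' ≤ ‖z‖} := fun z hz => by
      have := (hballn z hz).1
      simp only [mem_ofPred_eq]; linarith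
    have e3 : ∫ z in ball c ρ, Φ z / ‖z‖ ^ p ≤ ∫ z in {z : Pt n | ε' ≤ ‖z‖}, Φ z / ‖z‖ ^ p :=
      setIntegral_mono_set hi1 (Eventually.of_forall fun z => div_nonneg (hΦ0 z) (by positivity))
        (Eventually.of_forall hsub)
    have hci : IntegrableOn (fun _ : Pt n => m - 3 * ε) (ball c ρ) volume :=
      integrableOn_const hfin
    have e4 : ∫ z in ball c ρ, (w (y + z) + (m - 3 * ε)) / R ^ p ≤ ∫ z in ball c ρ, Φ z / ‖z‖ ^ p := by
      refine setIntegral_mono_on ((hwint.add hci).div_const _) (hi1.mono_set hsub)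
        measurableSet_ball ?_
      intro z hz
      obtain ⟨hz1, hz2⟩ := hballn z hz
      have hz0 : 0 < ‖z‖ := by linarith
      calc (w (y + z) + (m - 3 * ε)) / R ^ p ≤ Φ z / R ^ p := by
            gcongr; linarith [hΦ2 z]
        _ ≤ Φ z / ‖z‖ ^ p := by
            have := hΦ0 z
            gcongr
    rw [integral_div, integral_add hwint hci, setIntegral_const, hVc, smul_eq_mul] at e4
    have e5 := e4.trans (e3.trans e1.le)
    rw [div_le_iff₀ hRp] at e5
    have e6 : 2 * ε * (∫ z in {z : Pt n | ε' ≤ ‖z‖}, min (‖z‖ ^ 2) 1 / ‖z‖ ^ p) ≤ 2 * ε * K := by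
      gcongr
    have e7 := mul_le_mul_of_nonneg_left e6 hRp.le
    linarith
  have hlim := (((hlap y).neg.add_const (2 * ε * K)).const_mul (R ^ p))
  have := ge_of_tendsto hlim (by
    filter_upwards [Ioo_mem_nhdsGT (by linarith : (0:ℝ) < ‖c‖ - ρ)] with ε' hε'
    exact hmain ε' hε')
  linarith

/-- integral of a translate over a ball -/
def avg (n : ℕ) (hn : 0 < n) (u : Pt n → ℝ) (y : Pt n) (ρ t : ℝ) : ℝ :=
  ∫ z in ball (0 : Pt n) ρ, u (y + t • eN n hn + z)

/-- the key estimate, as a proposition -/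
def KeyProp (n : ℕ) (hn : 0 < n) (s Cns : ℝ) (f : ℝ → ℝ) (u : Pt n → ℝ) (K : ℝ) : Prop :=
  ∀ (τ m ε : ℝ) (x0 : Pt n), 0 < ε → (∀ x, -m ≤ u (x + τ • eN n hn) - u x) →
    u (x0 + τ • eN n hn) - u x0 < -m + ε →
    ∃ y, ‖y - x0‖ ≤ 1 ∧ u (y + τ • eN n hn) - u y ≤ -m + ε ∧
      ∀ t ρ R : ℝ, 0 < ρ → ρ < |t| → |t| + ρ ≤ R →
        avg n hn u y ρ (t + τ) - avg n hn u y ρ t ≤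
          (-m + 3 * ε) * volume.real (ball (0 : Pt n) ρ) +
            R ^ ((n : ℝ) + 2 * s) * ((f (u y) - f (u (y + τ • eN n hn))) / Cns + 2 * ε * K)

lemma eN_norm (n : ℕ) (hn : 0 < n) : ‖eN n hn‖ = 1 := by
  simp [eN]

lemma eN_last (n : ℕ) (hn : 0 < n) : (eN n hn) (lastIdx n hn) = 1 := by
  simp [eN]

lemma u_cont (n : ℕ) (u : Pt n → ℝ) (huC : C11loc n u Set.univ) : Continuous u := by
  rw [continuous_iff_continuousAt]
  intro x
  obtain ⟨ε, hε, -, hd, -⟩ := huC x (mem_univ x)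
  exact (hd.differentiableAt (ball_mem_nhds x hε)).continuousAt

lemma lap_center (n : ℕ) (s Cns : ℝ) (hC : 0 < Cns) (u : Pt n → ℝ) (x : Pt n) (L : ℝ)
    (h : HasFracLap n s Cns u x L) :
    Tendsto (fun ε : ℝ => ∫ z in {z : Pt n | ε ≤ ‖z‖},
        (u x - u (x + z)) / ‖z‖ ^ ((n : ℝ) + 2 * s)) (nhdsWithin 0 (Set.Ioi 0)) (nhds (L / Cns)) := by
  have h1 := Tendsto.const_mul Cns⁻¹ h
  rw [inv_mul_eq_div] at h1
  refine h1.congr fun ε => ?_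
  rw [← mul_assoc, inv_mul_cancel₀ hC.ne', one_mul]
  have := (measurePreserving_add_left (volume : Measure (Pt n)) x).setIntegral_preimage_emb
    (measurableEmbedding_addLeft x)
    (fun y => (u x - u y) / dist x y ^ ((n : ℝ) + 2 * s)) {y : Pt n | ε ≤ dist x y}
  rw [← this]
  simp

lemma avg_integrable (n : ℕ) (u : Pt n → ℝ) (hu : Continuous u) (y c : Pt n) (ρ : ℝ) :
    IntegrableOn (fun z => u (y + z)) (ball c ρ) volume :=
  ((hu.comp (continuous_const.add continuous_id)).continuousOn.integrableOn_compact
      (isCompact_closedBall c ρ)).mono_set ball_subset_closedBall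

lemma key_u (n : ℕ) (hn : 0 < n) (s : ℝ) (hs : s ∈ Set.Ioo (0 : ℝ) 1) (Cns : ℝ) (hCns : 0 < Cns)
    (f : ℝ → ℝ) (u : Pt n → ℝ) (hu : Continuous u)
    (heq : ∀ x : Pt n, HasFracLap n s Cns u x (f (u x)))
    (hub : ∀ x : Pt n, |u x| ≤ 1) : ∃ K, 0 ≤ K ∧ KeyProp n hn s Cns f u K := by
  obtain ⟨K, hK, h⟩ := key_abs n hn s hs
  refine ⟨K, hK, ?_⟩
  intro τ m ε x0 hε hm hx0
  have hcont : Continuous (fun x => u (x + τ • eN n hn) - u x) := by fun_prop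
  obtain ⟨y, hy1, hy2, hy3⟩ := h (fun x => u (x + τ • eN n hn) - u x)
    (fun x => f (u (x + τ • eN n hn)) / Cns - f (u x) / Cns) hcont
    (fun x => by
      have h1 := abs_le.1 (hub x)
      have h2 := abs_le.1 (hub (x + τ • eN n hn))
      rw [abs_le]; constructor <;> linarith)
    (fun x => by
      have h1 := lap_center n s Cns hCns u _ _ (heq (x + τ • eN n hn))
      have h2 := lap_center n s Cns hCns u _ _ (heq x)
      refine (h1.sub h2).congr' ?_
      filter_upwards [self_mem_nhdsWithin] with ε' hε'
      have hint : ∀ x, IntegrableOn (fun z : Pt n => (u x - u (x + z)) / ‖z‖ ^ ((n : ℝ) + 2 * s))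
          {z : Pt n | ε' ≤ ‖z‖} volume := by
        intro x
        refine shell_integrable n hn s hs (fun z => u x - u (x + z)) (by
          have := hu.measurable; fun_prop) 2 ?_ ε' hε'
        intro z
        have h2 := abs_le.1 (hub x)
        have h3 := abs_le.1 (hub (x + z))
        rw [abs_le]; constructor <;> linarith
      rw [← integral_sub (hint _) (hint _)]
      congr 1
      ext z
      rw [← sub_div, add_right_comm x z]
      ring) m ε x0 hε hm hx0
  refine ⟨y, hy1, hy2, ?_⟩
  intro t ρ R hρ ht hR
  have hnt : ‖t • eN n hn‖ = |t| := by rw [norm_smul, eN_norm, mul_one, Real.norm_eq_abs]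
  have h4 := hy3 (t • eN n hn) ρ R hρ (by rwa [hnt]) (by rwa [hnt])
  have h5 : ∫ z in ball (t • eN n hn) ρ, (u (y + z + τ • eN n hn) - u (y + z))
      = avg n hn u y ρ (t + τ) - avg n hn u y ρ t := by
    have := (measurePreserving_add_left (volume : Measure (Pt n))
      (t • eN n hn)).setIntegral_preimage_emb (measurableEmbedding_addLeft _)
      (fun z => u (y + z + τ • eN n hn) - u (y + z)) (ball (t • eN n hn) ρ)
    rw [← this]
    have hpre : (fun z => t • eN n hn + z) ⁻¹' (ball (t • eN n hn) ρ) = ball 0 ρ := by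
      ext z; simp
    rw [hpre]
    unfold avg
    rw [← integral_sub (avg_integrable n u hu _ _ _) (avg_integrable n u hu _ _ _)]
    congr 1
    ext z
    rw [add_smul]
    congr 2 <;> abel
  rw [h5] at h4
  convert h4 using 3
  ring

lemma avg_bounds (n : ℕ) (hn : 0 < n) (u : Pt n → ℝ) (hu : Continuous u) (y : Pt n) (ρ t a b : ℝ)
    (h : ∀ z ∈ ball (0 : Pt n) ρ, a ≤ u (y + t • eN n hn + z) ∧ u (y + t • eN n hn + z) ≤ b) :
    a * volume.real (ball (0 : Pt n) ρ) ≤ avg n hn u y ρ t ∧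
    avg n hn u y ρ t ≤ b * volume.real (ball (0 : Pt n) ρ) := by
  have hfin : volume (ball (0 : Pt n) ρ) ≠ ⊤ := measure_ball_lt_top.ne
  have hi := avg_integrable n u hu (y + t • eN n hn) 0 ρ
  have h1 := setIntegral_mono_on (integrableOn_const hfin) hi measurableSet_ball
    (fun z hz => (h z hz).1)
  have h2 := setIntegral_mono_on hi (integrableOn_const hfin) measurableSet_ball
    (fun z hz => (h z hz).2)
  rw [setIntegral_const, smul_eq_mul, mul_comm] at h1 h2
  exact ⟨h1, h2⟩

lemma avg_tele (n : ℕ) (hn : 0 < n) (u : Pt n → ℝ) (y : Pt n) (ρ t0 τ B : ℝ) (N : ℕ)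
    (h : ∀ j : ℕ, j < N → avg n hn u y ρ (t0 + j * τ + τ) - avg n hn u y ρ (t0 + j * τ) ≤ B) :
    avg n hn u y ρ (t0 + N * τ) - avg n hn u y ρ t0 ≤ N * B := by
  have h1 := Finset.sum_range_sub (fun j : ℕ => avg n hn u y ρ (t0 + j * τ)) N
  simp only [Nat.cast_zero, zero_mul, add_zero] at h1
  rw [← h1]
  have h2 : ∑ i ∈ Finset.range N, (avg n hn u y ρ (t0 + ((i + 1 : ℕ) : ℝ) * τ)
      - avg n hn u y ρ (t0 + i * τ)) ≤ ∑ i ∈ Finset.range N, B := by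
    refine Finset.sum_le_sum fun i hi => ?_
    have := h i (Finset.mem_range.1 hi)
    have e : t0 + ((i + 1 : ℕ) : ℝ) * τ = t0 + i * τ + τ := by push_cast; ring
    rw [e]; exact this
  simpa using h2

lemma vol_pos (n : ℕ) (ρ : ℝ) (hρ : 0 < ρ) : 0 < volume.real (ball (0 : Pt n) ρ) :=
  ENNReal.toReal_pos (measure_ball_pos _ _ hρ).ne' measure_ball_lt_top.ne

lemma inf_ex {X : Type*} (w : X → ℝ) (B κ : ℝ) (hB : ∀ x, -B ≤ w x) (x1 : X) (h1 : w x1 < -κ) :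
    ∃ m, κ < m ∧ (∀ x, -m ≤ w x) ∧ ∀ ε > 0, ∃ x, w x < -m + ε := by
  have : Nonempty X := ⟨x1⟩
  have hbdd : BddBelow (range w) := ⟨-B, by rintro _ ⟨x, rfl⟩; exact hB x⟩
  refine ⟨-(⨅ x, w x), ?_, ?_, ?_⟩
  · have := ciInf_le hbdd x1
    linarith
  · intro x
    rw [neg_neg]
    exact ciInf_le hbdd x
  · intro ε hε
    rw [neg_neg]
    exact exists_lt_of_ciInf_lt (by linarith)

lemma lemC (n : ℕ) (hn : 0 < n) (s Cns : ℝ) (hCns : 0 < Cns)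
    (f : ℝ → ℝ) (u : Pt n → ℝ) (hu : Continuous u) (hub : ∀ x : Pt n, |u x| ≤ 1)
    (K : ℝ) (hK : 0 ≤ K) (hkey : KeyProp n hn s Cns f u K)
    (τ m ε : ℝ) (hτ : 0 < τ) (hm0 : 0 < m) (hε : 0 < ε)
    (hm : ∀ x, -m ≤ u (x + τ • eN n hn) - u x)
    (hinf : ∀ ε > 0, ∃ x, u (x + τ • eN n hn) - u x < -m + ε) :
    ∃ y, u (y + τ • eN n hn) - u y < -m + ε ∧ f (u (y + τ • eN n hn)) < f (u y) := by
  obtain ⟨N, hN⟩ := exists_nat_gt (4 / m)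
  rw [div_lt_iff₀ hm0] at hN
  set R := ((N : ℝ) + 1) * τ with hR
  have hRp : 0 < R ^ ((n : ℝ) + 2 * s) := Real.rpow_pos_of_pos (by positivity) _
  set P := R ^ ((n : ℝ) + 2 * s) with hP
  have hV := vol_pos n (τ / 2) (by positivity)
  set V := volume.real (ball (0 : Pt n) (τ / 2)) with hVd
  set D := 3 * V + 2 * P * K with hD
  have hD0 : 0 < D := by positivity
  set ε1 := min (ε / 2) (m * V / (4 * D)) with hε1
  have hε10 : 0 < ε1 := by positivity
  have hε1a : ε1 ≤ ε / 2 := min_le_left _ _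
  have hε1b : ε1 * D ≤ m * V / 4 := by
    calc ε1 * D ≤ m * V / (4 * D) * D := by gcongr; exact min_le_right _ _
      _ = m * V / 4 := by field_simp
  obtain ⟨x0, hx0⟩ := hinf ε1 hε10
  obtain ⟨y, hy1, hy2, hy3⟩ := hkey τ m ε1 x0 hε10 hm hx0
  refine ⟨y, by linarith, ?_⟩
  by_contra hcon
  rw [not_lt] at hcon
  have htele := avg_tele n hn u y (τ / 2) τ τ (-(3 / 4) * m * V) N (by
    intro j hj
    have hj' : (j : ℝ) + 1 ≤ N := by exact_mod_cast hj
    have hj0 : (0 : ℝ) ≤ j := Nat.cast_nonneg j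
    have hpos : 0 < τ + j * τ := by positivity
    have h := hy3 (τ + j * τ) (τ / 2) R (by positivity) (by rw [abs_of_pos hpos]; nlinarith)
      (by rw [abs_of_pos hpos, hR]; nlinarith)
    have hg : (f (u y) - f (u (y + τ • eN n hn))) / Cns ≤ 0 :=
      div_nonpos_of_nonpos_of_nonneg (by linarith) hCns.le
    have h2 := mul_nonpos_of_nonneg_of_nonpos hRp.le hg
    rw [mul_add] at h
    simp only [hD] at hε1b
    linarith)
  have hb : ∀ t, -1 * V ≤ avg n hn u y (τ / 2) t ∧ avg n hn u y (τ / 2) t ≤ 1 * V := fun t =>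
    avg_bounds n hn u hu y (τ / 2) t (-1) 1 fun z _ => abs_le.1 (hub _)
  have h1 := (hb (τ + N * τ)).1
  have h2 := (hb τ).2
  nlinarith

set_option maxHeartbeats 1000000 in
lemma lemU (n : ℕ) (hn : 0 < n) (s : ℝ) (hs : s ∈ Set.Ioo (0 : ℝ) 1) (Cns : ℝ) (hCns : 0 < Cns)
    (f : ℝ → ℝ) (A : ℝ) (hA : ∀ v ∈ Icc (-1 : ℝ) 1, |f v| ≤ A)
    (u : Pt n → ℝ) (hu : Continuous u) (hub : ∀ x : Pt n, |u x| ≤ 1)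
    (K : ℝ) (hK : 0 ≤ K) (hkey : KeyProp n hn s Cns f u K) (κ : ℝ) (hκ : 0 < κ) :
    ∃ t0 > (0 : ℝ), ∀ t : ℝ, 0 < t → t ≤ t0 → ∀ x, u x - κ ≤ u (x + (-t) • eN n hn) := by
  have hA0 : 0 ≤ A := (abs_nonneg _).trans (hA 0 (by norm_num))
  have hs0 := hs.1
  set p := (n : ℝ) + 2 * s with hp
  set D0 := 2 * A / Cns with hD0
  have hD00 : 0 ≤ D0 := by positivity
  have hV1 := vol_pos n 1 one_pos
  set V1 := volume.real (ball (0 : Pt n) 1) with hV1d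
  set qq := κ * V1 / (4 * (3 : ℝ) ^ p * 2 ^ n * (D0 + 1)) with hqq
  have h3p : (0 : ℝ) < 3 ^ p := by positivity
  have hqq0 : 0 < qq := by positivity
  set r := qq ^ ((2 * s)⁻¹) with hr
  have hr0 : 0 < r := Real.rpow_pos_of_pos hqq0 _
  have hrq : r ^ (2 * s) = qq := Real.rpow_inv_rpow hqq0.le (by positivity)
  have hV := vol_pos n (r / 2) (by positivity)
  have hVr : volume.real (ball (0 : Pt n) (r / 2)) = (r / 2) ^ n * V1 := by
    rw [Measure.real, Measure.addHaar_ball_of_pos _ _ (by positivity : 0 < r / 2), ENNReal.toReal_mul,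
      ENNReal.toReal_ofReal (by positivity)]
    simp [hV1d, Measure.real]
  set V := volume.real (ball (0 : Pt n) (r / 2)) with hVd
  set P := (3 * r) ^ p with hP
  have hP0 : 0 < P := Real.rpow_pos_of_pos (by positivity) _
  have hPe : P = 3 ^ p * (r ^ n * qq) := by
    rw [hP, Real.mul_rpow (by norm_num) hr0.le, hp, Real.rpow_add hr0 (n : ℝ), hrq,
      Real.rpow_natCast]
  have hPD : P * D0 ≤ κ / 4 * V := by
    calc P * D0 ≤ P * (D0 + 1) := by gcongr; linarith
      _ = κ / 4 * V := by
        rw [hPe, hVr, hqq, div_pow]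
        have : D0 + 1 ≠ 0 := by positivity
        field_simp
  obtain ⟨N, hN⟩ := exists_nat_gt (8 / κ)
  have hN0 : (0 : ℝ) < N := lt_trans (by positivity) hN
  rw [div_lt_iff₀ hκ] at hN
  refine ⟨r / N, by positivity, ?_⟩
  intro t ht htt x
  rw [le_div_iff₀ hN0] at htt
  by_contra hcon
  rw [not_le] at hcon
  obtain ⟨m, hmκ, hm, hinf⟩ := inf_ex (fun x => u (x + (-t) • eN n hn) - u x) 2 κ
    (fun x => by
      have h1 := abs_le.1 (hub x)
      have h2 := abs_le.1 (hub (x + (-t) • eN n hn))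
      linarith) x (by linarith)
  set D := 3 * V + 2 * P * K with hD
  have hDp : 0 < D := by positivity
  set ε := κ * V / (4 * D) with hε
  have hε0 : 0 < ε := by positivity
  have hεD : ε * D = κ * V / 4 := by rw [hε]; field_simp
  obtain ⟨x0, hx0⟩ := hinf ε hε0
  obtain ⟨y, hy1, hy2, hy3⟩ := hkey (-t) m ε x0 hε0 hm hx0
  have hg : (f (u y) - f (u (y + (-t) • eN n hn))) / Cns ≤ D0 := by
    rw [hD0]
    gcongr
    have h1 := abs_le.1 (hA (u y) (abs_le.1 (hub _)))
    have h2 := abs_le.1 (hA (u (y + (-t) • eN n hn)) (abs_le.1 (hub _)))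
    linarith
  have htele := avg_tele n hn u y (r / 2) (-r) (-t) (-(1 / 2) * κ * V) N (by
    intro j hj
    have hj' : (j : ℝ) + 1 ≤ N := by exact_mod_cast hj
    have hj0 : (0 : ℝ) ≤ j := Nat.cast_nonneg j
    have hjt : 0 ≤ (j : ℝ) * t := by positivity
    have hjt2 : (j : ℝ) * t ≤ r := by nlinarith
    have habs : |-r + j * -t| = r + j * t := by
      rw [abs_of_nonpos (by linarith)]; ring
    have h := hy3 (-r + j * -t) (r / 2) (3 * r) (by positivity) (by rw [habs]; linarith)
      (by rw [habs]; linarith)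
    have h2 := mul_le_mul_of_nonneg_left hg hP0.le
    rw [mul_add] at h
    simp only [hD] at hεD
    have h3 : κ * V ≤ m * V := by gcongr
    linarith)
  have hb : ∀ t, -1 * V ≤ avg n hn u y (r / 2) t ∧ avg n hn u y (r / 2) t ≤ 1 * V := fun t =>
    avg_bounds n hn u hu y (r / 2) t (-1) 1 fun z _ => abs_le.1 (hub _)
  have h1 := (hb (-r + N * -t)).1
  have h2 := (hb (-r)).2
  have h3 : 8 * V < N * κ * V := by gcongr
  linarith

lemma lemD (n : ℕ) (hn : 0 < n) (s : ℝ) (Cns : ℝ) (hCns : 0 < Cns)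
    (f : ℝ → ℝ) (hfc : ContinuousOn f (Set.Icc (-1 : ℝ) 1))
    (u : Pt n → ℝ) (hu : Continuous u) (hub : ∀ x : Pt n, |u x| ≤ 1)
    (hlim : ∀ ε > (0 : ℝ), ∃ M > (0 : ℝ), ∀ x : Pt n,
      (M < x (lastIdx n hn) → |u x - 1| < ε) ∧ (x (lastIdx n hn) < -M → |u x + 1| < ε))
    (K : ℝ) (hK : 0 ≤ K) (hkey : KeyProp n hn s Cns f u K) (a b M : ℝ) (ha : 0 < a) (hM : 0 < M) :
    ∃ κ > (0 : ℝ), ∀ τ : ℝ, a ≤ τ → τ ≤ b → ∀ m, 0 ≤ m → m ≤ κ →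
      (∀ x, -m ≤ u (x + τ • eN n hn) - u x) →
      ∀ x0 : Pt n, |x0 (lastIdx n hn)| ≤ M → -m + κ ≤ u (x0 + τ • eN n hn) - u x0 := by
  by_cases hab : a ≤ b
  swap
  · exact ⟨1, one_pos, fun τ h1 h2 => absurd (h1.trans h2) hab⟩
  have hb0 : 0 < b := by linarith
  obtain ⟨M1, hM10, hM1⟩ := hlim (1 / 2) (by norm_num)
  obtain ⟨J, hJ⟩ := exists_nat_gt ((M + 1 + M1) / a + 1)
  have hJ1 : M + 1 + M1 < ((J : ℝ) - 1) * a := by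
    rw [← div_lt_iff₀ ha]; linarith
  have hJ0 : (1 : ℝ) < J := lt_of_le_of_lt (by
    have : 0 ≤ (M + 1 + M1) / a := by positivity
    linarith) hJ
  set R := ((J : ℝ) + 1) * b with hR
  have hP0 : 0 < R ^ ((n : ℝ) + 2 * s) := Real.rpow_pos_of_pos (by positivity) _
  set P := R ^ ((n : ℝ) + 2 * s) with hP
  have hV := vol_pos n (a / 4) (by positivity)
  set V := volume.real (ball (0 : Pt n) (a / 4)) with hVd
  set ω := V * Cns / (8 * J * P) with hω
  have hω0 : 0 < ω := by positivity
  have huc := isCompact_Icc.uniformContinuousOn_of_continuous hfc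
  rw [Metric.uniformContinuousOn_iff] at huc
  obtain ⟨d, hd0, hd⟩ := huc ω hω0
  set D := 3 * V + 2 * P * K with hD
  have hD0 : 0 < D := by positivity
  set κ := min (d / 2) (V / (8 * J * D)) with hκ
  have hκ0 : 0 < κ := by positivity
  have hκd : κ ≤ d / 2 := min_le_left _ _
  have hκD : κ * D ≤ V / (8 * J) := by
    calc κ * D ≤ V / (8 * J * D) * D := by gcongr; exact min_le_right _ _
      _ = V / (8 * J) := by field_simp
  refine ⟨κ, hκ0, ?_⟩
  intro τ haτ hτb m hm0 hmκ hm x0 hx0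
  by_contra hcon
  rw [not_le] at hcon
  obtain ⟨y, hy1, hy2, hy3⟩ := hkey τ m κ x0 hκ0 hm hcon
  have hτ0 : 0 < τ := by linarith
  have hyM : |y (lastIdx n hn)| ≤ M + 1 := by
    have h1 := PiLp.norm_apply_le (y - x0) (lastIdx n hn)
    rw [PiLp.sub_apply, Real.norm_eq_abs] at h1
    have h2 := abs_sub_abs_le_abs_sub (y (lastIdx n hn)) (x0 (lastIdx n hn))
    linarith
  have hyM' := abs_le.1 hyM
  have hg : (f (u y) - f (u (y + τ • eN n hn))) / Cns ≤ ω / Cns := by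
    gcongr
    have h1 := hd (u y) (abs_le.1 (hub _)) (u (y + τ • eN n hn)) (abs_le.1 (hub _)) (by
      rw [Real.dist_eq, abs_sub_lt_iff]
      have := hm y
      constructor <;> linarith)
    rw [Real.dist_eq] at h1
    exact (le_abs_self _).trans h1.le
  have hωe : P * (ω / Cns) = V / (8 * J) := by
    rw [hω]; field_simp
  have htele := avg_tele n hn u y (a / 4) (-(J : ℝ) * τ + τ / 2) τ (V / (4 * J)) (2 * J) (by
    intro j hj
    have hj' : (j : ℝ) + 1 ≤ 2 * J := by exact_mod_cast hj
    have hj0 : (0 : ℝ) ≤ j := Nat.cast_nonneg j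
    have e : -(J : ℝ) * τ + τ / 2 + j * τ = ((j : ℝ) - J + 1 / 2) * τ := by ring
    have habs : |-(J : ℝ) * τ + τ / 2 + j * τ| = |(j : ℝ) - J + 1 / 2| * τ := by
      rw [e, abs_mul, abs_of_pos hτ0]
    have hge : 1 / 2 ≤ |(j : ℝ) - J + 1 / 2| := by
      rcases le_or_gt J j with hjJ | hjJ
      · have : (J : ℝ) ≤ j := by exact_mod_cast hjJ
        rw [abs_of_nonneg (by linarith)]; linarith
      · have : (j : ℝ) + 1 ≤ J := by exact_mod_cast hjJ
        rw [abs_of_nonpos (by linarith)]; linarith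
    have hle : |(j : ℝ) - J + 1 / 2| ≤ J := by
      rw [abs_le]; constructor <;> linarith
    have hle2 : |(j : ℝ) - J + 1 / 2| * τ ≤ J * b := by gcongr
    have h := hy3 (-(J : ℝ) * τ + τ / 2 + j * τ) (a / 4) R (by positivity)
      (by rw [habs]; nlinarith) (by rw [habs, hR]; linarith)
    have h2 := mul_le_mul_of_nonneg_left hg hP0.le
    rw [mul_add] at h
    have h3 : 0 ≤ m * V := by positivity
    have h4 : V / (4 * J) = V / (8 * J) + V / (8 * J) := by field_simp; norm_num
    simp only [hD] at hκD
    rw [h4]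
    linarith)
  have e1 : ((2 * J : ℕ) : ℝ) * (V / (4 * J)) = V / 2 := by
    push_cast; field_simp; norm_num
  have e2 : -(J : ℝ) * τ + τ / 2 + ((2 * J : ℕ) : ℝ) * τ = ((J : ℝ) + 1 / 2) * τ := by
    push_cast; ring
  have e3 : -(J : ℝ) * τ + τ / 2 = -(((J : ℝ) - 1 / 2) * τ) := by ring
  rw [e1, e2, e3] at htele
  have hJτ : ((J : ℝ) - 1) * a ≤ (J - 1) * τ := by
    apply mul_le_mul_of_nonneg_left haτ; linarith
  have hcoord : ∀ (t : ℝ) (z : Pt n), (y + t • eN n hn + z) (lastIdx n hn)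
      = y (lastIdx n hn) + t + z (lastIdx n hn) := by
    intro t z
    simp [eN_last]
  have hz : ∀ z ∈ ball (0 : Pt n) (a / 4), |z (lastIdx n hn)| ≤ a / 4 := by
    intro z hz
    have := PiLp.norm_apply_le z (lastIdx n hn)
    rw [Real.norm_eq_abs] at this
    rw [mem_ball_zero_iff] at hz
    linarith
  have h1 := (avg_bounds n hn u hu y (a / 4) (((J : ℝ) + 1 / 2) * τ) (1 / 2) 1 (by
    intro z hzb
    refine ⟨?_, (abs_le.1 (hub _)).2⟩
    have h := abs_le.1 (hz z hzb)
    have := abs_lt.1 ((hM1 (y + (((J : ℝ) + 1 / 2) * τ) • eN n hn + z)).1 (by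
      rw [hcoord]; linarith))
    linarith)).1
  have h2 := (avg_bounds n hn u hu y (a / 4) (-(((J : ℝ) - 1 / 2) * τ)) (-1) (-1 / 2) (by
    intro z hzb
    refine ⟨(abs_le.1 (hub _)).1, ?_⟩
    have h := abs_le.1 (hz z hzb)
    have := abs_lt.1 ((hM1 (y + (-(((J : ℝ) - 1 / 2) * τ)) • eN n hn + z)).2 (by
      rw [hcoord]; linarith))
    linarith)).2
  linarith

/-- Monotonicity of solutions of `(-Δ)^s u = f(u)` in the whole space,
for De Giorgi type nonlinearities. -/
theorem monotonicity_whole_space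
    (n : ℕ) (hn : 0 < n) (s : ℝ) (hs : s ∈ Set.Ioo (0 : ℝ) 1) (Cns : ℝ) (hCns : 0 < Cns)
    (f : ℝ → ℝ) (hfc : ContinuousOn f (Set.Icc (-1 : ℝ) 1))
    (hfmono : ∃ δ > (0 : ℝ), AntitoneOn f (Set.Icc (-1 : ℝ) (-1 + δ)) ∧
      AntitoneOn f (Set.Icc (1 - δ) (1 : ℝ)))
    (u : Pt n → ℝ) (huL : MemL2s n s u) (huC : C11loc n u Set.univ)
    (heq : ∀ x : Pt n, HasFracLap n s Cns u x (f (u x)))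
    (hub : ∀ x : Pt n, |u x| ≤ 1)
    (hlim : ∀ ε > (0 : ℝ), ∃ M > (0 : ℝ), ∀ x : Pt n,
      (M < x (lastIdx n hn) → |u x - 1| < ε) ∧ (x (lastIdx n hn) < -M → |u x + 1| < ε)) :
    ∀ τ : ℝ, 0 < τ → ∀ x : Pt n, u x < u (x + τ • eN n hn) := by
  have hu : Continuous u := u_cont n u huC
  obtain ⟨K, hK, hkey⟩ := key_u n hn s hs Cns hCns f u hu heq hub
  obtain ⟨δ, hδ, hf1, hf2⟩ := hfmono
  obtain ⟨M, hM0, hM⟩ := hlim δ hδ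
  obtain ⟨A, hA⟩ := isCompact_Icc.exists_bound_of_continuousOn hfc
  -- location of bad points
  have hlow : ∀ v w : ℝ, -1 ≤ v → v < w → w ≤ -1 + δ → f w ≤ f v := fun v w h1 h2 h3 =>
    hf1 ⟨h1, by linarith⟩ ⟨by linarith, h3⟩ h2.le
  have hhigh : ∀ v w : ℝ, 1 - δ ≤ v → v < w → w ≤ 1 → f w ≤ f v := fun v w h1 h2 h3 =>
    hf2 ⟨h1, by linarith⟩ ⟨by linarith, h3⟩ h2.le
  have hcoord : ∀ (x : Pt n) (t : ℝ), (x + t • eN n hn) (lastIdx n hn)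
      = x (lastIdx n hn) + t := by
    intro x t
    simp [eN_last]
  have hloc : ∀ τ : ℝ, 0 < τ → ∀ y, u (y + τ • eN n hn) < u y → f (u (y + τ • eN n hn)) < f (u y) →
      |y (lastIdx n hn)| ≤ M ∧ τ ≤ 2 * M := by
    intro τ hτ y hy hfy
    have hb1 := abs_le.1 (hub y)
    have hb2 := abs_le.1 (hub (y + τ • eN n hn))
    have c1 : -M ≤ y (lastIdx n hn) := by
      by_contra hc
      have := abs_lt.1 ((hM y).2 (by linarith))
      have := hlow _ _ hb2.1 hy (by linarith)
      linarith
    have c2 : y (lastIdx n hn) + τ ≤ M := by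
      by_contra hc
      have := abs_lt.1 ((hM (y + τ • eN n hn)).1 (by rw [hcoord]; linarith))
      have := hhigh _ _ (by linarith) hy hb1.2
      linarith
    exact ⟨abs_le.2 ⟨c1, by linarith⟩, by linarith⟩
  have hbd : ∀ (τ : ℝ) (x : Pt n), -2 ≤ u (x + τ • eN n hn) - u x := fun τ x => by
    have h1 := abs_le.1 (hub x)
    have h2 := abs_le.1 (hub (x + τ • eN n hn))
    linarith
  -- large τ
  have hlarge : ∀ τ : ℝ, 2 * M < τ → ∀ x, u x ≤ u (x + τ • eN n hn) := by
    intro τ hτ x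
    by_contra hc
    obtain ⟨m, hm0, hm, hinf⟩ := inf_ex (fun x => u (x + τ • eN n hn) - u x) 2 0 (hbd τ) x
      (by linarith)
    obtain ⟨y, hy1, hy2⟩ := lemC n hn s Cns hCns f u hu hub K hK hkey τ m m (by linarith) hm0 hm0
      hm hinf
    have := (hloc τ (by linarith) y (by linarith) hy2).2
    linarith
  -- sliding
  have hslide : ∀ a : ℝ, 0 < a → ∀ x, u x ≤ u (x + a • eN n hn) := by
    intro a ha
    by_cases haM : 2 * M < a
    · exact hlarge a haM
    rw [not_lt] at haM
    set b := 2 * M + 1 with hb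
    obtain ⟨κ, hκ0, hκ⟩ := lemD n hn s Cns hCns f hfc u hu hub hlim K hK hkey a b M ha hM0
    obtain ⟨t0, ht0, hU⟩ := lemU n hn s hs Cns hCns f A (fun v hv => hA v hv) u hu hub K hK hkey
      κ hκ0
    have hstep : ∀ k : ℕ, ∀ τ : ℝ, a ≤ τ → τ ≤ b → b - k * t0 ≤ τ → ∀ x, u x ≤ u (x + τ • eN n hn) := by
      intro k
      induction k with
      | zero =>
        intro τ _ _ h
        exact hlarge τ (by simp at h; linarith)
      | succ k ih =>
        intro τ h1 h2 h3 x
        by_cases hcase : b - k * t0 ≤ τ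
        · exact ih τ h1 h2 hcase x
        rw [not_le] at hcase
        push_cast at h3
        set τ1 := min b (τ + t0) with hτ1
        have hτ1a : τ ≤ τ1 := le_min h2 (by linarith)
        have hτ1b : τ1 ≤ b := min_le_left _ _
        have hτ1c : τ1 ≤ τ + t0 := min_le_right _ _
        have hτ1d : b - k * t0 ≤ τ1 := le_min (by
          have : 0 ≤ (k : ℝ) * t0 := by positivity
          linarith) (by linarith)
        have hprev := ih τ1 (by linarith) hτ1b hτ1d
        have hτlt : τ < τ1 := by linarith
        have hlowκ : ∀ x, u x - κ ≤ u (x + τ • eN n hn) := by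
          intro x
          have e := hU (τ1 - τ) (by linarith) (by linarith) (x + τ1 • eN n hn)
          have e2 : x + τ1 • eN n hn + (-(τ1 - τ)) • eN n hn = x + τ • eN n hn := by
            rw [add_assoc, ← add_smul]; congr 2; ring
          rw [e2] at e
          linarith [hprev x]
        by_contra hc
        obtain ⟨m, hm0, hm, hinf⟩ := inf_ex (fun x => u (x + τ • eN n hn) - u x) 2 0 (hbd τ) x
          (by linarith)
        have hmκ : m ≤ κ := by
          by_contra hmk
          obtain ⟨x2, hx2⟩ := hinf (m - κ) (by linarith)
          linarith [hlowκ x2]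
        obtain ⟨y, hy1, hy2⟩ := lemC n hn s Cns hCns f u hu hub K hK hkey τ m (min m κ)
          (by linarith) hm0 (lt_min hm0 hκ0) hm hinf
        have hmm : min m κ ≤ m := min_le_left _ _
        have hmk : min m κ ≤ κ := min_le_right _ _
        have hyM := (hloc τ (by linarith) y (by linarith) hy2).1
        have := hκ τ h1 h2 m hm0.le hmκ hm y hyM
        linarith
    obtain ⟨k, hk⟩ := exists_nat_gt (b / t0)
    rw [div_lt_iff₀ ht0] at hk
    exact hstep k a le_rfl (by linarith) (by linarith)
  -- strictness
  intro τ hτ x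
  obtain ⟨κ, hκ0, hκ⟩ := lemD n hn s Cns hCns f hfc u hu hub hlim K hK hkey τ τ
    (|x (lastIdx n hn)| + 1) hτ (by positivity)
  have := hκ τ le_rfl le_rfl 0 le_rfl hκ0.le (fun x => by linarith [hslide τ hτ x]) x (by linarith)
  linarith
end
end

section
/- Let f : [−1, 1] → ℝ be continuous and suppose there exists δ > 0 such that f is nonincreasing on [−1, −1+δ] and nonincreasing on [1−δ, 1]. Let u ∈ L_{2s} ∩ C^{1,1}_loc(ℝ^n) satisfy (-Δ)^s u(x) = f(u(x)) for all x ∈ ℝ^n, |u(x)| ≤ 1 for all x ∈ ℝ^n, and u(x', x_n) → ±1 as x_n → ±∞, uniformly in x' ∈ ℝ^{n−1}. Then u depends on x_n only: there exists a strictly increasing function g : ℝ → ℝ such that u(x', x_n) = g(x_n) for all (x', x_n) ∈ ℝ^n. -/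
open MeasureTheory Filter Metric Set

noncomputable section

open Topology

/-- truncated kernel -/
def kr (n : ℕ) (p ρ : ℝ) (z : Pt n) : ℝ := if ρ ≤ ‖z‖ then (‖z‖ ^ p)⁻¹ else 0

lemma kr_nonneg (n : ℕ) (p ρ : ℝ) (z : Pt n) : 0 ≤ kr n p ρ z := by
  unfold kr; split_ifs <;> positivity

lemma kr_neg (n : ℕ) (p ρ : ℝ) (z : Pt n) : kr n p ρ (-z) = kr n p ρ z := by
  unfold kr; simp

lemma kr_meas (n : ℕ) (p ρ : ℝ) : Measurable (kr n p ρ) := by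
  unfold kr
  exact Measurable.ite (measurableSet_le measurable_const measurable_norm) (by fun_prop) measurable_const

lemma pow_mul_rpow_aux {n : ℕ} (hn : 0 < n) {y : ℝ} (hy : 0 < y) (q : ℝ) :
    y ^ (n - 1) * y ^ q = y ^ ((n : ℝ) - 1 + q) := by
  rw [Real.rpow_add hy, ← Real.rpow_natCast, Nat.cast_sub hn]; simp

lemma kr_int {n : ℕ} (hn : 0 < n) {s : ℝ} (hs : 0 < s) {ρ : ℝ} (hρ : 0 < ρ) :
    Integrable (kr n (n + 2 * s) ρ) volume := by
  have : Nonempty (Fin n) := ⟨⟨0, hn⟩⟩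
  have := (integrable_fun_norm_addHaar (E := Pt n) volume
    (f := fun r : ℝ => if ρ ≤ r then (r ^ ((n : ℝ) + 2 * s))⁻¹ else 0)).2 ?_
  · exact this
  · have h1 : IntegrableOn (fun t : ℝ => t ^ (-1 - 2 * s)) (Ioi (ρ / 2)) :=
      integrableOn_Ioi_rpow_of_lt (by linarith) (by linarith)
    have h2 : IntegrableOn (fun t : ℝ => (Ici ρ).indicator (fun t : ℝ => t ^ (-1 - 2 * s)) t) (Ioi 0) := by
      rw [integrableOn_indicator_iff measurableSet_Ici]
      apply h1.mono_set
      intro x hx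
      have := hx.1
      simp only [mem_Ici, mem_Ioi] at *
      linarith
    refine h2.congr_fun ?_ measurableSet_Ioi
    intro y hy
    simp only [mem_Ioi] at hy
    by_cases h : ρ ≤ y
    · simp only [indicator, mem_Ici, h, if_true, finrank_euclideanSpace, Fintype.card_fin, smul_eq_mul]
      rw [← Real.rpow_neg hy.le, pow_mul_rpow_aux hn hy]
      congr 1; ring
    · simp [indicator, h]

lemma kr_large {n : ℕ} (hn : 0 < n) {s : ℝ} (hs : 0 < s) (B : ℝ) :
    ∃ ρ > 0, B ≤ ∫ z, kr n (n + 2 * s) ρ z := by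
  have : Nonempty (Fin n) := ⟨⟨0, hn⟩⟩
  set c : ℝ := n * volume.real (ball (0 : Pt n) 1) / (2 * s) with hc
  have hv : 0 < volume.real (ball (0 : Pt n) 1) := by
    rw [Measure.real, ENNReal.toReal_pos_iff]
    exact ⟨measure_ball_pos _ _ one_pos, measure_ball_lt_top⟩
  have hcp : 0 < c := by positivity
  have key : ∀ ρ > 0, ∫ z, kr n (n + 2 * s) ρ z = c * ρ ^ (-(2 * s)) := by
    intro ρ hρ
    have := (integral_fun_norm_addHaar (E := Pt n) volume
      (fun r : ℝ => if ρ ≤ r then (r ^ ((n : ℝ) + 2 * s))⁻¹ else 0))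
    unfold kr
    rw [this]
    have h3 : ∫ y in Ioi (0:ℝ), y ^ (Module.finrank ℝ (Pt n) - 1) •
        (if ρ ≤ y then (y ^ ((n : ℝ) + 2 * s))⁻¹ else 0) =
        ∫ y in Ioi ρ, y ^ (-1 - 2 * s) := by
      have : ∫ y in Ioi (0:ℝ), y ^ (Module.finrank ℝ (Pt n) - 1) •
        (if ρ ≤ y then (y ^ ((n : ℝ) + 2 * s))⁻¹ else 0) =
        ∫ y in Ioi (0:ℝ), (Ici ρ).indicator (fun y => y ^ (-1 - 2 * s)) y := by
        apply setIntegral_congr_fun measurableSet_Ioi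
        intro y hy
        simp only [mem_Ioi] at hy
        by_cases h : ρ ≤ y
        · simp only [indicator, mem_Ici, h, if_true, finrank_euclideanSpace, Fintype.card_fin, smul_eq_mul]
          rw [← Real.rpow_neg hy.le, pow_mul_rpow_aux hn hy]
          congr 1; ring
        · simp [indicator, h]
      rw [this, setIntegral_indicator measurableSet_Ici]
      have : Ioi (0:ℝ) ∩ Ici ρ = Ici ρ := by
        ext x; simp only [mem_inter_iff, mem_Ioi, mem_Ici]; constructor
        · exact fun h => h.2
        · exact fun h => ⟨by linarith, h⟩
      rw [this, integral_Ici_eq_integral_Ioi]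
    rw [h3, integral_Ioi_rpow_of_lt (by linarith) hρ]
    simp only [finrank_euclideanSpace, Fintype.card_fin, nsmul_eq_mul, smul_eq_mul]
    rw [show -1 - 2 * s + 1 = -(2 * s) by ring, neg_div_neg_eq, hc]
    ring
  refine ⟨((|B| + 1) / c) ^ (-(1 / (2 * s))), by positivity, ?_⟩
  rw [key _ (by positivity), ← Real.rpow_mul (by positivity)]
  rw [show -(1 / (2 * s)) * -(2 * s) = 1 by field_simp, Real.rpow_one]
  rw [mul_div_cancel₀ _ hcp.ne']
  linarith [le_abs_self B]

/-- near part is integrable -/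
lemma near_int {n : ℕ} (hn : 0 < n) {s : ℝ} (hs : s < 1) (ρ : ℝ) (hρ : 0 < ρ) :
    IntegrableOn (fun z : Pt n => ‖z‖ ^ 2 * (‖z‖ ^ ((n : ℝ) + 2 * s))⁻¹) (ball 0 ρ) volume := by
  have : Nonempty (Fin n) := ⟨⟨0, hn⟩⟩
  refine (integrableOn_fun_norm_addHaar (E := Pt n) volume
    (f := fun r : ℝ => r ^ 2 * (r ^ ((n : ℝ) + 2 * s))⁻¹)).2 ?_
  have h1 : IntegrableOn (fun t : ℝ => t ^ (1 - 2 * s)) (Ioo 0 ρ) := by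
    rw [intervalIntegral.integrableOn_Ioo_rpow_iff hρ]; linarith
  refine h1.congr_fun ?_ measurableSet_Ioo
  intro y hy
  have hy := hy.1
  simp only [finrank_euclideanSpace, Fintype.card_fin, smul_eq_mul]
  rw [← Real.rpow_neg hy.le, mul_left_comm, pow_mul_rpow_aux hn hy, ← Real.rpow_natCast, ← Real.rpow_add hy]
  congr 1; push_cast; ring

lemma kr_trans {n : ℕ} (hn : 0 < n) {s : ℝ} (hs : 0 < s) {ρ : ℝ} (hρ : 0 < ρ) :
    Tendsto (fun h : Pt n => ∫ z, |kr n (n + 2 * s) ρ z - kr n (n + 2 * s) ρ (z - h)|) (𝓝 0) (𝓝 0) := by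
  have : Nonempty (Fin n) := ⟨⟨0, hn⟩⟩
  set p : ℝ := n + 2 * s with hp
  have hp0 : 0 < p := by positivity
  have h0 : (0:ℝ) = ∫ z : Pt n, (0:ℝ) := by simp
  rw [h0]
  apply tendsto_integral_filter_of_dominated_convergence
    (fun z => kr n p ρ z + 2 ^ p * kr n p (ρ / 2) z)
  · refine Eventually.of_forall fun h => ?_
    have := kr_meas n p ρ
    exact Measurable.aestronglyMeasurable (by fun_prop)
  · filter_upwards [ball_mem_nhds (0 : Pt n) (half_pos hρ)] with h hh
    refine Eventually.of_forall fun z => ?_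
    rw [mem_ball_zero_iff] at hh
    have h1 : kr n p ρ (z - h) ≤ 2 ^ p * kr n p (ρ / 2) z := by
      have ht : ‖z - h‖ ≤ ‖z‖ + ‖h‖ := norm_sub_le _ _
      have ht' : ‖z‖ ≤ ‖z - h‖ + ‖h‖ := by simpa using norm_add_le (z - h) h
      by_cases hz : ρ ≤ ‖z - h‖
      · have hz2 : ρ / 2 ≤ ‖z‖ := by linarith
        have hzp : 0 < ‖z‖ := by linarith
        simp only [kr, hz, hz2, if_true]
        rw [show (2:ℝ) ^ p * (‖z‖ ^ p)⁻¹ = ((‖z‖ / 2) ^ p)⁻¹ by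
          rw [Real.div_rpow hzp.le (by norm_num)]; field_simp]
        apply inv_anti₀ (by positivity)
        exact Real.rpow_le_rpow (by positivity) (by linarith) hp0.le
      · have := kr_nonneg n p (ρ / 2) z
        simp only [kr, hz, if_false]
        exact mul_nonneg (by positivity) this
    have h2 := kr_nonneg n p ρ z
    have h3 := kr_nonneg n p ρ (z - h)
    rw [Real.norm_eq_abs, abs_abs, abs_le]
    constructor <;> linarith
  · exact (kr_int hn hs hρ).add ((kr_int hn hs (half_pos hρ)).const_mul _)
  · have hsph : ∀ᵐ z : Pt n, z ∉ sphere (0 : Pt n) ρ :=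
      measure_eq_zero_iff_ae_notMem.1 (Measure.addHaar_sphere volume 0 ρ)
    filter_upwards [hsph] with z hz
    have hz' : ‖z‖ ≠ ρ := by simpa using hz
    have hc : ContinuousAt (kr n p ρ) z := by
      rcases lt_or_gt_of_ne hz' with h | h
      · have : kr n p ρ =ᶠ[𝓝 z] fun _ => 0 := by
          filter_upwards [(isOpen_lt continuous_norm continuous_const).mem_nhds h] with y hy
          replace hy : _ < _ := hy
          simp [kr, not_le.2 hy]
        exact continuousAt_const.congr this.symm
      · have : kr n p ρ =ᶠ[𝓝 z] fun y => (‖y‖ ^ p)⁻¹ := by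
          filter_upwards [(isOpen_lt continuous_const continuous_norm).mem_nhds h] with y hy
          replace hy : _ < _ := hy
          simp [kr, hy.le]
        refine ContinuousAt.congr ?_ this.symm
        have hzp : 0 < ‖z‖ := by linarith
        refine ContinuousAt.inv₀ ?_ (by positivity)
        exact continuous_norm.continuousAt.rpow_const (Or.inl hzp.ne')
    have ht : Tendsto (fun h : Pt n => z - h) (𝓝 0) (𝓝 z) := by
      have : Continuous (fun h : Pt n => z - h) := by fun_prop
      simpa using this.tendsto 0
    have := ((tendsto_const_nhds (x := kr n p ρ z)).sub (hc.tendsto.comp ht)).abs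
    simpa using this

lemma frac_kr {n : ℕ} (p : ℝ) (u : Pt n → ℝ) (x : Pt n) (ε : ℝ) :
    ∫ y in {y : Pt n | ε ≤ dist x y}, (u x - u y) / dist x y ^ p
      = ∫ z, kr n p ε z * (u x - u (x + z)) := by
  rw [← integral_indicator (measurableSet_le measurable_const (by fun_prop)),
    ← integral_add_left_eq_self _ x]
  congr 1
  ext z
  by_cases h : ε ≤ ‖z‖
  · have : x + z ∈ {y : Pt n | ε ≤ dist x y} := by
      show ε ≤ dist x (x + z)
      simpa using h
    rw [indicator_of_mem this]
    simp [kr, h, div_eq_mul_inv, mul_comm]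
  · have : x + z ∉ {y : Pt n | ε ≤ dist x y} := by
      show ¬ ε ≤ dist x (x + z)
      simpa using h
    rw [indicator_of_notMem this]
    simp [kr, h]

lemma kr_mul_int {n : ℕ} (hn : 0 < n) {s : ℝ} (hs : 0 < s) {ρ : ℝ} (hρ : 0 < ρ)
    (g : Pt n → ℝ) (hg : Continuous g) (B : ℝ) (hB : ∀ z, |g z| ≤ B) :
    Integrable (fun z => kr n (n + 2 * s) ρ z * g z) volume := by
  refine Integrable.mul_bdd (c := B) (kr_int hn hs hρ) hg.aestronglyMeasurable ?_
  exact Eventually.of_forall fun z => by simpa using hB z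

/-- Perturbed maximum lemma. -/
lemma pert_max {n : ℕ} (hn : 0 < n) {s : ℝ} (hs : s ∈ Ioo (0 : ℝ) 1) {Cns : ℝ} (hC : 0 < Cns)
    (f : ℝ → ℝ) (u : Pt n → ℝ) (huc : Continuous u) (hub : ∀ x, |u x| ≤ 1)
    (heq : ∀ x : Pt n, HasFracLap n s Cns u x (f (u x))) {ρ : ℝ} (hρ : 0 < ρ) :
    ∃ C1 > 0, ∀ (h : Pt n) (A ε : ℝ) (x0 : Pt n), 0 < ε → (∀ y, u y - u (y + h) ≤ A) →
      A - ε < u x0 - u (x0 + h) → ∃ x : Pt n, ‖x - x0‖ ≤ ρ ∧ A - ε < u x - u (x + h) ∧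
        Cns * ∫ z, kr n (n + 2 * s) ρ z * (A - (u (x + z) - u (x + z + h)))
          ≤ f (u x) - f (u (x + h)) + C1 * ε := by
  set p : ℝ := n + 2 * s with hp
  set I0 : ℝ := ∫ z, kr n p ρ z with hI0
  set N0 : ℝ := ∫ z in ball (0 : Pt n) ρ, ‖z‖ ^ 2 * (‖z‖ ^ p)⁻¹ with hN0
  have hI0' : 0 ≤ I0 := integral_nonneg fun z => kr_nonneg _ _ _ _
  have hN0' : 0 ≤ N0 := integral_nonneg fun z => by positivity
  refine ⟨Cns * (I0 + N0 / ρ ^ 2) + 1, by positivity, ?_⟩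
  intro h A ε x0 hε hA hx0
  -- the maximum point
  set w : Pt n → ℝ := fun y => u y - u (y + h) with hw
  have hwc : Continuous w := by fun_prop
  have hwb : ∀ y, |w y| ≤ 2 := fun y => by
    have h1 := abs_le.1 (hub y)
    have h2 := abs_le.1 (hub (y + h))
    simp only [hw]
    rw [abs_le]; constructor <;> linarith
  obtain ⟨x, hxm, hx⟩ := (isCompact_closedBall x0 ρ).exists_isMaxOn ⟨x0, mem_closedBall_self hρ.le⟩
    (f := fun y => w y - ε / ρ ^ 2 * ‖y - x0‖ ^ 2) (by fun_prop)
  have hx1 : ‖x - x0‖ ≤ ρ := by simpa [dist_eq_norm] using hxm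
  have hx00 := hx (mem_closedBall_self hρ.le)
  simp only [sub_self, norm_zero, mem_ofPred_eq] at hx00
  have hpos : 0 ≤ ε / ρ ^ 2 * ‖x - x0‖ ^ 2 := by positivity
  have hx2 : A - ε < w x := by
    have : w x0 - ε / ρ ^ 2 * 0 ^ 2 = w x0 := by ring
    have h3 : A - ε < w x0 := hx0
    linarith
  have hmax : ∀ y, w y - ε / ρ ^ 2 * ‖y - x0‖ ^ 2 ≤ w x - ε / ρ ^ 2 * ‖x - x0‖ ^ 2 := by
    intro y
    by_cases hy : y ∈ closedBall x0 ρ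
    · exact hx hy
    · have hy' : ρ < ‖y - x0‖ := by simpa [dist_eq_norm] using hy
      have h1 : ε ≤ ε / ρ ^ 2 * ‖y - x0‖ ^ 2 := by
        rw [div_mul_eq_mul_div, le_div_iff₀ (by positivity)]
        have : ρ ^ 2 ≤ ‖y - x0‖ ^ 2 := by gcongr
        nlinarith
      have h2 : w y ≤ A := hA y
      have h3 : A - ε < w x0 := hx0
      have : w x0 - ε / ρ ^ 2 * 0 ^ 2 = w x0 := by ring
      linarith
  refine ⟨x, hx1, hx2, ?_⟩
  -- the limit
  have hlim : Tendsto (fun δ : ℝ => Cns * ∫ z, kr n p δ z * (w x - w (x + z)))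
      (𝓝[>] 0) (𝓝 (f (u x) - f (u (x + h)))) := by
    have h1 := heq x
    have h2 := heq (x + h)
    unfold HasFracLap at h1 h2
    simp only [frac_kr] at h1 h2
    refine (h1.sub h2).congr' ?_
    filter_upwards [self_mem_nhdsWithin] with δ hδ
    rw [← mul_sub, ← integral_sub]
    · congr 2
      ext z
      simp only [hw]
      rw [show x + h + z = x + z + h by abel]
      ring
    · refine kr_mul_int hn hs.1 hδ _ (by fun_prop) 2 fun z => ?_
      have h1 := abs_le.1 (hub x)
      have h2 := abs_le.1 (hub (x + z))
      rw [abs_le]; constructor <;> linarith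
    · refine kr_mul_int hn hs.1 hδ _ (by fun_prop) 2 fun z => ?_
      have h1 := abs_le.1 (hub (x + h))
      have h2 := abs_le.1 (hub (x + h + z))
      rw [abs_le]; constructor <;> linarith
  have hAb : |A| ≤ 2 + ε := by
    have h1 := hA x
    have h2 := abs_le.1 (hwb x)
    rw [abs_le]
    constructor
    · have : w x ≤ A := h1
      linarith
    · linarith
  set J : ℝ := ∫ z, kr n p ρ z * (A - w (x + z)) with hJ
  have hJint : Integrable (fun z => kr n p ρ z * (A - w (x + z))) volume := by
    refine kr_mul_int hn hs.1 hρ _ (by fun_prop) (4 + ε) fun z => ?_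
    have h1 := abs_le.1 (hwb (x + z))
    have h2 := abs_le.1 hAb
    rw [abs_le]; constructor <;> linarith
  have hev : ∀ᶠ δ in 𝓝[>] (0:ℝ), Cns * (J - ε * I0 - ε / ρ ^ 2 * N0) ≤
      Cns * ∫ z, kr n p δ z * (w x - w (x + z)) := by
    have : ∀ᶠ δ in 𝓝[>] (0:ℝ), δ < ρ := nhdsWithin_le_nhds (Iio_mem_nhds hρ)
    filter_upwards [self_mem_nhdsWithin, this] with δ hδ hδρ
    replace hδ : 0 < δ := hδ
    apply mul_le_mul_of_nonneg_left _ hC.le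
    set D : Pt n → ℝ := fun z => kr n p δ z - kr n p ρ z with hD
    have hDeq : ∀ z, D z = if ‖z‖ < ρ then kr n p δ z else 0 := by
      intro z
      simp only [hD]
      by_cases hz : ‖z‖ < ρ
      · simp [kr, hz, not_le.2 hz]
      · have h1 : ρ ≤ ‖z‖ := not_lt.1 hz
        have h2 : δ ≤ ‖z‖ := by linarith
        simp [kr, h1, h2, hz]
    have hD0 : ∀ z, 0 ≤ D z := by
      intro z; rw [hDeq]; split_ifs
      · exact kr_nonneg _ _ _ _
      · exact le_rfl
    have hDint : Integrable D volume := (kr_int hn hs.1 hδ).sub (kr_int hn hs.1 hρ)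
    set c : Pt n := x - x0 with hc
    have hlin : Integrable (fun z => D z * inner ℝ c z) volume := by
      refine Integrable.mono' (hDint.const_mul (‖c‖ * ρ))
        (hDint.aestronglyMeasurable.mul (by fun_prop)) ?_
      refine Eventually.of_forall fun z => ?_
      rw [norm_mul, Real.norm_of_nonneg (hD0 z), mul_comm]
      by_cases hz : ‖z‖ < ρ
      · have := norm_inner_le_norm (𝕜 := ℝ) c z
        have h2 : ‖c‖ * ‖z‖ ≤ ‖c‖ * ρ := by gcongr
        exact mul_le_mul_of_nonneg_right (this.trans h2) (hD0 z)
      · simp [hDeq, hz]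
    have hlin0 : ∫ z, D z * inner ℝ c z = 0 := by
      have h1 := integral_neg_eq_self (fun z => D z * inner ℝ c z) (volume : Measure (Pt n))
      have h2 : ∀ z, D (-z) * inner ℝ c (-z) = -(D z * inner ℝ c z) := by
        intro z
        simp only [hD, kr_neg, inner_neg_right]; ring
      simp only [h2] at h1
      rw [integral_neg] at h1
      linarith
    have hNint : Integrable ((ball (0 : Pt n) ρ).indicator fun z => ‖z‖ ^ 2 * (‖z‖ ^ p)⁻¹) volume := by
      rw [integrable_indicator_iff measurableSet_ball]
      exact near_int hn hs.2 ρ hρ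
    have hqle : ∀ z, D z * ‖z‖ ^ 2 ≤ (ball (0 : Pt n) ρ).indicator (fun z => ‖z‖ ^ 2 * (‖z‖ ^ p)⁻¹) z := by
      intro z
      rw [hDeq]
      by_cases hz : ‖z‖ < ρ
      · rw [indicator_of_mem (by simpa using hz)]
        simp only [hz, if_true]
        rw [mul_comm]
        apply mul_le_mul_of_nonneg_left _ (by positivity)
        unfold kr
        split_ifs
        · exact le_rfl
        · positivity
      · rw [indicator_of_notMem (by simpa using hz)]
        simp [hz]
    have hqint : Integrable (fun z => D z * ‖z‖ ^ 2) volume := by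
      refine Integrable.mono' hNint (hDint.aestronglyMeasurable.mul (by fun_prop)) ?_
      refine Eventually.of_forall fun z => ?_
      rw [Real.norm_of_nonneg (mul_nonneg (hD0 z) (by positivity))]
      exact hqle z
    have hqI : ∫ z, D z * ‖z‖ ^ 2 ≤ N0 := by
      rw [hN0, ← integral_indicator measurableSet_ball]
      exact integral_mono hqint hNint hqle
    have hpt : ∀ z, kr n p ρ z * (A - w (x + z)) - ε * kr n p ρ z
        - ε / ρ ^ 2 * (D z * ‖z‖ ^ 2) - 2 * (ε / ρ ^ 2) * (D z * inner ℝ c z)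
        ≤ kr n p δ z * (w x - w (x + z)) := by
      intro z
      have hk : kr n p δ z = kr n p ρ z + D z := by simp [hD]
      have h1 := hmax (x + z)
      have h2 : ‖x + z - x0‖ ^ 2 = ‖c‖ ^ 2 + 2 * inner ℝ c z + ‖z‖ ^ 2 := by
        rw [show x + z - x0 = c + z by rw [hc]; abel]
        exact norm_add_sq_real c z
      rw [h2] at h1
      have h3 := mul_le_mul_of_nonneg_left h1 (hD0 z)
      have h4 := mul_le_mul_of_nonneg_left hx2.le (kr_nonneg n p ρ z)
      rw [hk]
      nlinarith
    have i1 := (hJint.sub ((kr_int hn hs.1 hρ).const_mul ε))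
    have i2 := i1.sub (hqint.const_mul (ε / ρ ^ 2))
    have i3 := i2.sub (hlin.const_mul (2 * (ε / ρ ^ 2)))
    have hfin : Integrable (fun z => kr n p δ z * (w x - w (x + z))) volume := by
      refine kr_mul_int hn hs.1 hδ _ (by fun_prop) 4 fun z => ?_
      have h1 := abs_le.1 (hwb (x + z))
      have h2 := abs_le.1 (hwb x)
      rw [abs_le]; constructor <;> linarith
    have hmono := integral_mono i3 hfin hpt
    have e3 := integral_sub i2 (hlin.const_mul (2 * (ε / ρ ^ 2)))
    have e2 := integral_sub i1 (hqint.const_mul (ε / ρ ^ 2))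
    have e1 := integral_sub hJint ((kr_int hn hs.1 hρ).const_mul ε)
    simp only [integral_const_mul, Pi.sub_apply, hlin0] at e1 e2 e3 hmono
    have hq2 : ε / ρ ^ 2 * ∫ z, D z * ‖z‖ ^ 2 ≤ ε / ρ ^ 2 * N0 := by gcongr
    linarith
  have := ge_of_tendsto hlim hev
  have e : Cns * (J - ε * I0 - ε / ρ ^ 2 * N0) = Cns * J - Cns * (I0 + N0 / ρ ^ 2) * ε := by ring
  show Cns * J ≤ _
  nlinarith

lemma unif_cont {n : ℕ} (hn : 0 < n) {s : ℝ} (hs : s ∈ Ioo (0 : ℝ) 1) {Cns : ℝ} (hC : 0 < Cns)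
    (f : ℝ → ℝ) (u : Pt n → ℝ) (huc : Continuous u) (hub : ∀ x, |u x| ≤ 1)
    (heq : ∀ x : Pt n, HasFracLap n s Cns u x (f (u x))) (K : ℝ) (hK : ∀ x, |f (u x)| ≤ K)
    {η : ℝ} (hη : 0 < η) :
    ∃ r > 0, ∀ h : Pt n, ‖h‖ < r → ∀ x, u x - u (x + h) ≤ η := by
  obtain ⟨ρ, hρ, hI⟩ := kr_large hn hs.1 ((2 * K / Cns + 2) / η)
  obtain ⟨C1, hC1, key⟩ := pert_max hn hs hC f u huc hub heq hρ
  set p : ℝ := n + 2 * s with hp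
  have htr := (kr_trans hn hs.1 hρ).eventually (gt_mem_nhds one_pos)
  obtain ⟨r, hr, hrr⟩ := Metric.eventually_nhds_iff.1 htr
  refine ⟨r, hr, fun h hh => ?_⟩
  have hT := hrr (y := h) (by simpa using hh)
  by_contra! hx
  obtain ⟨x, hx⟩ := hx
  set A := ⨆ y, (u y - u (y + h)) with hA
  have hbd : BddAbove (range fun y => u y - u (y + h)) := by
    refine ⟨2, ?_⟩
    rintro _ ⟨y, rfl⟩
    have h1 := abs_le.1 (hub y)
    have h2 := abs_le.1 (hub (y + h))
    simp only; linarith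
  have hle : ∀ y, u y - u (y + h) ≤ A := fun y => le_ciSup hbd y
  have hηA : η < A := lt_of_lt_of_le hx (hle x)
  have hε : 0 < Cns / C1 := by positivity
  obtain ⟨x0, hx0⟩ := exists_lt_of_lt_ciSup (show A - Cns / C1 < ⨆ y, (u y - u (y + h)) by linarith)
  obtain ⟨y, -, -, hy⟩ := key h A (Cns / C1) x0 hε hle hx0
  rw [mul_div_cancel₀ _ hC1.ne'] at hy
  have i0 : Integrable (fun z => kr n p ρ z * u (y + z)) volume :=
    kr_mul_int hn hs.1 hρ _ (by fun_prop) 1 fun z => hub _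
  have i1 : Integrable (fun z => kr n p ρ z * u (y + z + h)) volume :=
    kr_mul_int hn hs.1 hρ _ (by fun_prop) 1 fun z => hub _
  have ik := kr_int hn hs.1 hρ
  have i2 : Integrable (fun z => kr n p ρ (z - h) * u (y + z)) volume := by
    have := i1.comp_sub_right h
    refine this.congr (Eventually.of_forall fun z => ?_)
    simp only
    rw [show y + (z - h) + h = y + z by abel]
  have e1 : ∫ z, kr n p ρ z * u (y + z + h) = ∫ z, kr n p ρ (z - h) * u (y + z) := by
    rw [← integral_sub_right_eq_self (fun z => kr n p ρ z * u (y + z + h)) h]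
    congr 1; ext z
    rw [show y + (z - h) + h = y + z by abel]
  have e2 : ∫ z, kr n p ρ z * (A - (u (y + z) - u (y + z + h))) =
      A * (∫ z, kr n p ρ z) - ∫ z, (kr n p ρ z - kr n p ρ (z - h)) * u (y + z) := by
    have : ∀ z, kr n p ρ z * (A - (u (y + z) - u (y + z + h))) =
      A * kr n p ρ z - (kr n p ρ z * u (y + z) - kr n p ρ z * u (y + z + h)) := fun z => by ring
    simp only [this, sub_mul]
    have q1 := integral_sub (ik.const_mul A) (i0.sub i1)
    have q2 := integral_sub i0 i1
    have q3 := integral_sub i0 i2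
    simp only [Pi.sub_apply] at q1
    rw [integral_const_mul, q2, e1] at q1
    rw [q3]
    exact q1
  have e3 : ∫ z, (kr n p ρ z - kr n p ρ (z - h)) * u (y + z) ≤ ∫ z, |kr n p ρ z - kr n p ρ (z - h)| := by
    apply integral_mono
    · refine (i0.sub i2).congr (Eventually.of_forall fun z => ?_)
      simp only [Pi.sub_apply, sub_mul]
    · exact (ik.sub (ik.comp_sub_right h)).abs
    · intro z
      refine (le_abs_self _).trans ?_
      rw [abs_mul]
      exact mul_le_of_le_one_right (abs_nonneg _) (hub _)
  have hf1 := abs_le.1 (hK y)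
  have hf2 := abs_le.1 (hK (y + h))
  rw [e2] at hy
  set I := ∫ z, kr n p ρ z
  have hK0 : 0 ≤ K := (abs_nonneg _).trans (hK y)
  rw [div_le_iff₀ hη] at hI
  have hIpos : 0 ≤ I := integral_nonneg fun z => kr_nonneg _ _ _ _
  have h5 : 2 * K / Cns + 2 ≤ A * I := by nlinarith
  have h6 : Cns * (2 * K / Cns + 1) < Cns * (A * I - ∫ z, (kr n p ρ z - kr n p ρ (z - h)) * u (y + z)) := by
    apply mul_lt_mul_of_pos_left _ hC
    linarith
  rw [mul_add, mul_div_cancel₀ _ hC.ne'] at h6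
  linarith

lemma coord_le {n : ℕ} (z : Pt n) (i : Fin n) : |z i| ≤ ‖z‖ := by
  simpa using PiLp.norm_apply_le z i

lemma chain {n : ℕ} (hn : 0 < n) {s : ℝ} (hs : s ∈ Ioo (0 : ℝ) 1)
    (u : Pt n → ℝ) (huc : Continuous u) (hub : ∀ x, |u x| ≤ 1) (i : Fin n)
    (M1 : ℝ) (hM1 : ∀ y : Pt n, M1 < y i → 1 / 2 ≤ u y) (hM2 : ∀ y : Pt n, y i < -M1 → u y ≤ -(1 / 2))
    (ν : Pt n) (hν : 0 < ν i) (X : ℝ) :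
    ∃ η > 0, ∀ t ∈ Icc (1 / 2 : ℝ) 1, ∀ x : Pt n, |x i| ≤ X → ∀ A : ℝ, 0 ≤ A →
      (∀ y, u y - u (y + t • ν) ≤ A) →
      η < ∫ z, kr n (n + 2 * s) (‖ν‖ / 8) z * (A - (u (x + z) - u (x + z + t • ν))) := by
  set p : ℝ := n + 2 * s with hp
  have hp0 : 0 < p := by have := hs.1; positivity
  have hνp : 0 < ‖ν‖ := lt_of_lt_of_le (lt_of_lt_of_le hν (le_abs_self _)) (coord_le ν i)
  set ρ := ‖ν‖ / 8 with hρ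
  have hρp : 0 < ρ := by positivity
  obtain ⟨N, hN⟩ := exists_nat_gt ((|M1| + |X| + ρ) / (ν i / 2))
  rw [div_lt_iff₀ (by positivity)] at hN
  set Q : ℝ := (N + 1) * ‖ν‖ + ρ with hQ
  have hQp : 0 < Q := by positivity
  set c : ℝ := (Q ^ p)⁻¹ with hc
  have hcp : 0 < c := by positivity
  set V : ℝ := volume.real (ball (0 : Pt n) ρ) with hV
  have hVp : 0 < V := by
    rw [hV, Measure.real, ENNReal.toReal_pos_iff]
    exact ⟨measure_ball_pos _ _ hρp, measure_ball_lt_top⟩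
  refine ⟨c * V / (2 * (2 * N + 1)), by positivity, ?_⟩
  intro t ht x hx A hA hle
  by_contra! hcon
  set J := ∫ z, kr n p ρ z * (A - (u (x + z) - u (x + z + t • ν))) with hJ
  set a : ℕ → Pt n := fun j => (((j : ℝ) - N - 1 / 2) * t) • ν with ha
  have hJint : Integrable (fun z => kr n p ρ z * (A - (u (x + z) - u (x + z + t • ν)))) volume := by
    refine kr_mul_int hn hs.1 hρp _ (by fun_prop) (A + 2) fun z => ?_
    have h1 := abs_le.1 (hub (x + z))
    have h2 := abs_le.1 (hub (x + z + t • ν))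
    rw [abs_le]; constructor <;> linarith
  have hgint : ∀ j, IntegrableOn (fun z => A - (u (x + a j + z) - u (x + a j + z + t • ν))) (ball 0 ρ) volume := by
    intro j
    have : Continuous (fun z => A - (u (x + a j + z) - u (x + a j + z + t • ν))) := by fun_prop
    exact (this.continuousOn.integrableOn_compact (isCompact_closedBall 0 ρ)).mono_set ball_subset_closedBall
  have hstep : ∀ j ∈ Finset.range (2 * N + 1),
      ∫ z in ball (0 : Pt n) ρ, (A - (u (x + a j + z) - u (x + a j + z + t • ν))) ≤ J / c := by
    intro j hj
    rw [le_div_iff₀ hcp, ← integral_mul_const, hJ,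
      ← integral_add_left_eq_self (fun z => kr n p ρ z * (A - (u (x + z) - u (x + z + t • ν)))) (a j),
      ← integral_indicator measurableSet_ball]
    apply integral_mono
    · rw [integrable_indicator_iff measurableSet_ball]
      exact (hgint j).mul_const c
    · exact hJint.comp_add_left (a j)
    · intro z
      have h0 : 0 ≤ A - (u (x + (a j + z)) - u (x + (a j + z) + t • ν)) := by
        linarith [hle (x + (a j + z))]
      by_cases hz : z ∈ ball (0 : Pt n) ρ
      · rw [indicator_of_mem hz]
        simp only
        rw [mul_comm, show x + a j + z = x + (a j + z) by abel]
        apply mul_le_mul_of_nonneg_right _ h0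
        have hz' : ‖z‖ < ρ := by simpa using hz
        have hna : ‖a j‖ = |(j : ℝ) - N - 1 / 2| * t * ‖ν‖ := by
          simp only [ha]
          rw [norm_smul, Real.norm_eq_abs, abs_mul, abs_of_nonneg (by linarith [ht.1] : 0 ≤ t)]
        have hlo : 1 / 2 ≤ |(j : ℝ) - N - 1 / 2| := by
          rcases Nat.lt_or_ge N j with h | h
          · have : (N : ℝ) + 1 ≤ j := by exact_mod_cast h
            rw [abs_of_nonneg (by linarith)]; linarith
          · have : (j : ℝ) ≤ N := by exact_mod_cast h
            rw [abs_of_nonpos (by linarith)]; linarith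
        have hhi : |(j : ℝ) - N - 1 / 2| ≤ N + 1 := by
          have h1 : (j : ℝ) ≤ 2 * N := by
            have := Finset.mem_range.1 hj
            exact_mod_cast (by omega : j ≤ 2 * N)
          have h2 : (0:ℝ) ≤ j := by positivity
          rw [abs_le]; constructor <;> linarith
        have hlo' : 2 * ρ ≤ ‖a j‖ := by
          rw [hna, hρ]
          have : 1 / 2 * (1 / 2) ≤ |(j : ℝ) - N - 1 / 2| * t :=
            mul_le_mul hlo ht.1 (by norm_num) (abs_nonneg _)
          nlinarith
        have hhi' : ‖a j‖ ≤ (N + 1) * ‖ν‖ := by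
          rw [hna]
          apply mul_le_mul_of_nonneg_right _ hνp.le
          nlinarith [ht.1, ht.2, abs_nonneg ((j : ℝ) - N - 1 / 2)]
        have h1 : ‖a j‖ ≤ ‖a j + z‖ + ‖z‖ := by simpa using norm_sub_le (a j + z) z
        have h2 : ‖a j + z‖ ≤ ‖a j‖ + ‖z‖ := norm_add_le _ _
        have h3 : ρ ≤ ‖a j + z‖ := by linarith
        simp only [kr, h3, if_true, hc]
        have h4 : 0 < ‖a j + z‖ := by linarith
        apply inv_anti₀ (by positivity)
        exact Real.rpow_le_rpow h4.le (by linarith) hp0.le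
      · rw [indicator_of_notMem hz]
        exact mul_nonneg (kr_nonneg _ _ _ _) h0
  have hsum := Finset.sum_le_sum hstep
  rw [← integral_finsetSum _ (fun j _ => hgint j)] at hsum
  have hlow : ∫ z in ball (0 : Pt n) ρ, (1 : ℝ) ≤ ∫ z in ball (0 : Pt n) ρ,
      ∑ j ∈ Finset.range (2 * N + 1), (A - (u (x + a j + z) - u (x + a j + z + t • ν))) := by
    apply setIntegral_mono_on _ _ measurableSet_ball
    · intro z hz
      have hz' : ‖z‖ < ρ := by simpa using hz
      have hzi := abs_le.1 (coord_le z i)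
      have hxi := abs_le.1 hx
      rw [Finset.sum_sub_distrib]
      have hshift : ∀ j, x + a j + z + t • ν = x + a (j + 1) + z := by
        intro j
        simp only [ha]
        push_cast
        rw [show ((j : ℝ) + 1 - N - 1 / 2) * t = ((j : ℝ) - N - 1 / 2) * t + t by ring, add_smul]
        abel
      simp only [hshift]
      rw [Finset.sum_range_sub' (fun j => u (x + a j + z))]
      simp only [Finset.sum_const, Finset.card_range, nsmul_eq_mul]
      have hc1 : (x + a 0 + z) i = x i - (N + 1 / 2) * t * ν i + z i := by
        simp [ha]; ring
      have hc2 : (x + a (2 * N + 1) + z) i = x i + (N + 1 / 2) * t * ν i + z i := by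
        simp only [ha, PiLp.add_apply, PiLp.smul_apply, smul_eq_mul]; push_cast; ring
      have hbig : |M1| + |X| + ρ < (N + 1 / 2) * t * ν i := by
        have : (N : ℝ) * (1 / 2) ≤ (N + 1 / 2) * t :=
          mul_le_mul (by linarith) ht.1 (by norm_num) (by positivity)
        nlinarith
      have hX := le_abs_self X
      have hM := le_abs_self M1
      have h1 := hM2 (x + a 0 + z) (by rw [hc1]; linarith)
      have h2 := hM1 (x + a (2 * N + 1) + z) (by rw [hc2]; linarith)
      have h3 : 0 ≤ ((2 * N + 1 : ℕ) : ℝ) * A := by positivity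
      linarith
    · exact integrableOn_const (by exact measure_ball_lt_top.ne)
    · exact integrable_finsetSum _ (fun j _ => hgint j)
  rw [setIntegral_const, smul_eq_mul, mul_one] at hlow
  have h9 := hlow.trans hsum
  simp only [Finset.sum_const, Finset.card_range, nsmul_eq_mul] at h9
  change V ≤ _ at h9
  have h10 : J / c ≤ V / (2 * (2 * N + 1)) := by
    rw [div_le_iff₀ hcp]
    calc J ≤ _ := hcon
      _ = _ := by ring
  have h11 : V ≤ V / 2 := by
    calc V ≤ _ := h9
      _ ≤ ((2 * N + 1 : ℕ) : ℝ) * (V / (2 * (2 * N + 1))) := by gcongr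
      _ = V / 2 := by push_cast; field_simp
  linarith

lemma tail_pos {n : ℕ} (hn : 0 < n) {s : ℝ} (hs : 0 < s) {ρ : ℝ} (hρ : 0 < ρ) (i : Fin n)
    (m : ℝ) (hm : ρ ≤ m) :
    0 < ∫ z, {z : Pt n | m < z i}.indicator (kr n (n + 2 * s) ρ) z := by
  have hopen : IsOpen {z : Pt n | m < z i} := isOpen_lt continuous_const (by fun_prop)
  have hpos : ∀ z ∈ {z : Pt n | m < z i}, 0 < kr n (n + 2 * s) ρ z := by
    intro z hz
    replace hz : m < z i := hz
    have h1 := (le_abs_self _).trans (coord_le z i)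
    have h2 : ρ ≤ ‖z‖ := by linarith
    have h3 : 0 < ‖z‖ := by linarith
    simp only [kr, h2, if_true]
    positivity
  rw [integral_indicator hopen.measurableSet]
  rw [setIntegral_pos_iff_support_of_nonneg_ae (Eventually.of_forall fun z => kr_nonneg _ _ _ _)
    (kr_int hn hs hρ).integrableOn]
  have : Function.support (kr n (n + 2 * s) ρ) ∩ {z : Pt n | m < z i} = {z : Pt n | m < z i} := by
    apply inter_eq_right.2
    intro z hz
    exact (hpos z hz).ne'
  rw [this]
  refine hopen.measure_pos volume ⟨EuclideanSpace.single i (m + 1), ?_⟩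
  show m < _
  simp

lemma max_princ {n : ℕ} (hn : 0 < n) {s : ℝ} (hs : s ∈ Ioo (0 : ℝ) 1) {Cns : ℝ} (hC : 0 < Cns)
    (f : ℝ → ℝ) (u : Pt n → ℝ) (huc : Continuous u) (hub : ∀ x, |u x| ≤ 1)
    (heq : ∀ x : Pt n, HasFracLap n s Cns u x (f (u x))) (i : Fin n)
    (hlim : ∀ ε > (0 : ℝ), ∃ M > (0 : ℝ), ∀ x : Pt n,
      (M < x i → |u x - 1| < ε) ∧ (x i < -M → |u x + 1| < ε))
    (δ : ℝ) (hf1 : AntitoneOn f (Set.Icc (-1 : ℝ) (-1 + δ)))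
    (hf2 : AntitoneOn f (Set.Icc (1 - δ) (1 : ℝ)))
    (M : ℝ) (hM1 : ∀ y : Pt n, M < y i → 1 - δ ≤ u y) (hM2 : ∀ y : Pt n, y i < -M → u y ≤ -1 + δ)
    {ρ : ℝ} (hρ : 0 < ρ) (h : Pt n) (hh : 0 < h i) (hy : ∃ y, 0 < u y - u (y + h))
    (B : ℝ) (hB : ∀ y, u y - u (y + h) ≤ B) (κ : ℝ) (hκ : 0 < κ) :
    ∃ A > 0, A ≤ B ∧ (∀ y, u y - u (y + h) ≤ A) ∧ ∃ x : Pt n, -M ≤ x i ∧ x i + h i ≤ M ∧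
      0 < u x - u (x + h) ∧
      Cns * ∫ z, kr n (n + 2 * s) ρ z * (A - (u (x + z) - u (x + z + h)))
          ≤ f (u x) - f (u (x + h)) + κ := by
  obtain ⟨C1, hC1, key⟩ := pert_max hn hs hC f u huc hub heq hρ
  set p : ℝ := n + 2 * s with hp
  set A := ⨆ y, (u y - u (y + h)) with hA
  have hbd : BddAbove (range fun y => u y - u (y + h)) := by
    refine ⟨B, ?_⟩
    rintro _ ⟨y, rfl⟩
    exact hB y
  have hle : ∀ y, u y - u (y + h) ≤ A := fun y => le_ciSup hbd y
  obtain ⟨y0, hy0⟩ := hy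
  have hA0 : 0 < A := hy0.trans_le (hle y0)
  refine ⟨A, hA0, ciSup_le hB, hle, ?_⟩
  obtain ⟨M', hM'0, hM'⟩ := hlim (A / 4) (by positivity)
  have htail1 : ∀ y : Pt n, M' < y i → A / 2 ≤ A - (u y - u (y + h)) := by
    intro y hy
    have h1 := abs_lt.1 ((hM' (y + h)).1 (by simp; linarith))
    have h2 := abs_le.1 (hub y)
    linarith
  have htail2 : ∀ y : Pt n, y i < -M' → A / 2 ≤ A - (u y - u (y + h)) := by
    intro y hy
    have h1 := abs_lt.1 ((hM' y).2 hy)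
    have h2 := abs_le.1 (hub (y + h))
    linarith
  set m := max M' ρ with hm
  set S : Set (Pt n) := {z : Pt n | m < z i} with hS
  set g : Pt n → ℝ := S.indicator (kr n p ρ) with hg
  have hc2 : 0 < ∫ z, g z := tail_pos hn hs.1 hρ i m (le_max_right _ _)
  set c2 := ∫ z, g z with hc2'
  have hSm : MeasurableSet S := (isOpen_lt continuous_const (by fun_prop)).measurableSet
  have hgint : Integrable g volume := (kr_int hn hs.1 hρ).indicator hSm
  have hlow : ∀ x : Pt n, A / 2 * c2 ≤ ∫ z, kr n p ρ z * (A - (u (x + z) - u (x + z + h))) := by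
    intro x
    have hJint : Integrable (fun z => kr n p ρ z * (A - (u (x + z) - u (x + z + h)))) volume := by
      refine kr_mul_int hn hs.1 hρ _ (by fun_prop) (A + 2) fun z => ?_
      have h1 := abs_le.1 (hub (x + z))
      have h2 := abs_le.1 (hub (x + z + h))
      rw [abs_le]; constructor <;> linarith
    have hnn : ∀ z, 0 ≤ kr n p ρ z * (A - (u (x + z) - u (x + z + h))) := fun z =>
      mul_nonneg (kr_nonneg _ _ _ _) (by linarith [hle (x + z)])
    rcases le_total 0 (x i) with hx | hx
    · rw [hc2', ← integral_const_mul]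
      apply integral_mono (hgint.const_mul _) hJint
      intro z
      by_cases hz : z ∈ S
      · simp only [hg, indicator_of_mem hz]
        rw [mul_comm]
        apply mul_le_mul_of_nonneg_left _ (kr_nonneg _ _ _ _)
        apply htail1
        replace hz : m < z i := hz
        have := le_max_left M' ρ
        simp only [PiLp.add_apply]; linarith
      · simp only [hg, indicator_of_notMem hz, mul_zero]; exact hnn z
    · rw [hc2', ← integral_neg_eq_self g, ← integral_const_mul]
      apply integral_mono (hgint.comp_neg.const_mul _) hJint
      intro z
      by_cases hz : -z ∈ S
      · simp only [hg, indicator_of_mem hz, kr_neg]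
        rw [mul_comm]
        apply mul_le_mul_of_nonneg_left _ (kr_nonneg _ _ _ _)
        apply htail2
        replace hz : m < (-z) i := hz
        have := le_max_left M' ρ
        simp only [PiLp.add_apply, PiLp.neg_apply] at *; linarith
      · simp only [hg, indicator_of_notMem hz, mul_zero]; exact hnn z
  set β : ℝ := min κ (Cns * (A / 2 * c2) / 2) with hβ
  have hβ0 : 0 < β := by positivity
  set ε : ℝ := min A (β / C1) with hε
  have hε0 : 0 < ε := by positivity
  have hεβ : C1 * ε ≤ β := by
    calc C1 * ε ≤ C1 * (β / C1) := by gcongr; exact min_le_right _ _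
      _ = β := mul_div_cancel₀ _ hC1.ne'
  obtain ⟨x0, hx0⟩ := exists_lt_of_lt_ciSup (show A - ε < ⨆ y, (u y - u (y + h)) by linarith)
  obtain ⟨x, -, hx1, hx2⟩ := key h A ε x0 hε0 hle hx0
  have hεA : ε ≤ A := min_le_left _ _
  have hβκ : β ≤ κ := min_le_left _ _
  have hβ2 : β ≤ Cns * (A / 2 * c2) / 2 := min_le_right _ _
  have hwx : 0 < u x - u (x + h) := by linarith
  have hl := mul_le_mul_of_nonneg_left (hlow x) hC.le
  have hfd : 0 < f (u x) - f (u (x + h)) := by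
    have : 0 < Cns * (A / 2 * c2) := by positivity
    linarith
  have hu1 := abs_le.1 (hub x)
  have hu2 := abs_le.1 (hub (x + h))
  refine ⟨x, ?_, ?_, hwx, by linarith⟩
  · by_contra! hcon
    have h1 := hM2 x hcon
    have := hf1 (a := u (x + h)) (b := u x) ⟨hu2.1, by linarith⟩ ⟨hu1.1, h1⟩ (by linarith)
    linarith
  · by_contra! hcon
    have h1 := hM1 (x + h) (by simpa using hcon)
    have := hf2 (a := u (x + h)) (b := u x) ⟨h1, hu2.2⟩ ⟨by linarith, hu1.2⟩ (by linarith)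
    linarith

lemma mono_dir {n : ℕ} (hn : 0 < n) {s : ℝ} (hs : s ∈ Ioo (0 : ℝ) 1) {Cns : ℝ} (hC : 0 < Cns)
    (f : ℝ → ℝ) (hfc : ContinuousOn f (Icc (-1 : ℝ) 1))
    (u : Pt n → ℝ) (huc : Continuous u) (hub : ∀ x, |u x| ≤ 1)
    (heq : ∀ x : Pt n, HasFracLap n s Cns u x (f (u x))) (i : Fin n)
    (hlim : ∀ ε > (0 : ℝ), ∃ M > (0 : ℝ), ∀ x : Pt n,
      (M < x i → |u x - 1| < ε) ∧ (x i < -M → |u x + 1| < ε))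
    (δ : ℝ) (hδ : 0 < δ) (hf1 : AntitoneOn f (Set.Icc (-1 : ℝ) (-1 + δ)))
    (hf2 : AntitoneOn f (Set.Icc (1 - δ) (1 : ℝ))) (h : Pt n) (hh : 0 < h i) (x : Pt n) :
    u x ≤ u (x + h) := by
  have humem : ∀ x, u x ∈ Icc (-1 : ℝ) 1 := fun x => abs_le.1 (hub x)
  obtain ⟨M, hM0, hM⟩ := hlim δ hδ
  have hM1 : ∀ y : Pt n, M < y i → 1 - δ ≤ u y := fun y hy => by
    have := abs_lt.1 ((hM y).1 hy); linarith
  have hM2 : ∀ y : Pt n, y i < -M → u y ≤ -1 + δ := fun y hy => by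
    have := abs_lt.1 ((hM y).2 hy); linarith
  obtain ⟨L, hL0, hL⟩ := hlim (1 / 2) (by norm_num)
  have hL1 : ∀ y : Pt n, L < y i → 1 / 2 ≤ u y := fun y hy => by
    have := abs_lt.1 ((hL y).1 hy); linarith
  have hL2 : ∀ y : Pt n, y i < -L → u y ≤ -(1 / 2) := fun y hy => by
    have := abs_lt.1 ((hL y).2 hy); linarith
  have mp := fun {ρ : ℝ} (hρ : 0 < ρ) => max_princ hn hs hC f u huc hub heq i hlim δ hf1 hf2 M hM1 hM2 hρ
  by_contra! hx
  set S : Set ℝ := {t | 1 ≤ t ∧ ∃ y, 0 < u y - u (y + t • h)} with hS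
  have h1S : (1 : ℝ) ∈ S := ⟨le_rfl, x, by rw [one_smul]; linarith⟩
  have hSb : ∀ t ∈ S, t ≤ 2 * M / h i := by
    rintro t ⟨ht1, hty⟩
    obtain ⟨A, -, -, -, y, hy1, hy2, -⟩ := mp one_pos (t • h)
      (by simp only [PiLp.smul_apply, smul_eq_mul]; positivity) hty 2
      (fun y => by have h1 := abs_le.1 (hub y); have h2 := abs_le.1 (hub (y + t • h)); linarith) 1 one_pos
    simp only [PiLp.smul_apply, smul_eq_mul] at hy2
    rw [le_div_iff₀ hh]; linarith
  have hbdd : BddAbove S := ⟨_, hSb⟩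
  set τ := sSup S with hτ
  have hτ1 : 1 ≤ τ := le_csSup hbdd h1S
  have hτle : ∀ y, u y - u (y + τ • h) ≤ 0 := by
    intro y
    have hcont : Continuous (fun t : ℝ => u y - u (y + t • h)) := by fun_prop
    have ht : Tendsto (fun t : ℝ => u y - u (y + t • h)) (𝓝[>] τ) (𝓝 (u y - u (y + τ • h))) :=
      (hcont.tendsto τ).mono_left nhdsWithin_le_nhds
    refine le_of_tendsto ht ?_
    filter_upwards [self_mem_nhdsWithin] with t htt
    replace htt : τ < t := htt
    by_contra! hcon
    have := le_csSup hbdd (show t ∈ S from ⟨by linarith, y, hcon⟩)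
    linarith
  set ν : Pt n := τ • h with hν
  have hνi : 0 < ν i := by simp only [hν, PiLp.smul_apply, smul_eq_mul]; positivity
  have hνp : 0 < ‖ν‖ := lt_of_lt_of_le (lt_of_lt_of_le hνi (le_abs_self _)) (coord_le ν i)
  obtain ⟨η, hη, hchain⟩ := chain hn hs u huc hub i L hL1 hL2 ν hνi M
  obtain ⟨θ, hθ, hfu⟩ := Metric.uniformContinuousOn_iff.1
    (isCompact_Icc.uniformContinuousOn_of_continuous hfc) (Cns * η / 2) (by positivity)
  obtain ⟨K, hK⟩ := isCompact_Icc.exists_bound_of_continuousOn hfc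
  obtain ⟨r, hr, hur⟩ := unif_cont hn hs hC f u huc hub heq K (fun x => hK _ (humem x)) (half_pos hθ)
  have hhp : 0 < ‖h‖ := lt_of_lt_of_le (lt_of_lt_of_le hh (le_abs_self _)) (coord_le h i)
  obtain ⟨t, htS, ht⟩ := exists_lt_of_lt_csSup ⟨1, h1S⟩
    (show τ - min (τ / 2) (r / ‖h‖) < sSup S by
      have : 0 < min (τ / 2) (r / ‖h‖) := by positivity
      linarith)
  have htτ : t ≤ τ := le_csSup hbdd htS
  have hm1 := min_le_left (τ / 2) (r / ‖h‖)
  have hm2 := min_le_right (τ / 2) (r / ‖h‖)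
  have hB : ∀ y, u y - u (y + t • h) ≤ θ / 2 := by
    intro y
    have h1 := hτle y
    have h2 := hur ((t - τ) • h) (by
      rw [norm_smul, Real.norm_eq_abs, abs_of_nonpos (by linarith), ← lt_div_iff₀ hhp]; linarith) (y + τ • h)
    rw [add_assoc, ← add_smul, add_sub_cancel] at h2
    linarith
  have hth : 0 < (t • h) i := by
    have := htS.1
    simp only [PiLp.smul_apply, smul_eq_mul]; positivity
  obtain ⟨A, hA0, hAB, hAle, y, hy1, hy2, hy3, hy4⟩ := mp (ρ := ‖ν‖ / 8) (by positivity) (t • h) hth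
    htS.2 (θ / 2) hB (Cns * η / 2) (by positivity)
  have hτp : 0 < τ := by linarith
  have htν : t • h = (t / τ) • ν := by
    rw [hν, smul_smul, div_mul_cancel₀ _ hτp.ne']
  have hch := hchain (t / τ) ⟨by rw [le_div_iff₀ hτp]; linarith, by rw [div_le_one hτp]; exact htτ⟩ y
    (by rw [abs_le]; constructor <;> linarith) A hA0.le (by rw [← htν]; exact hAle)
  rw [← htν] at hch
  have hd := hfu (u y) (humem y) (u (y + t • h)) (humem _) (by
    rw [Real.dist_eq, abs_of_pos hy3]; linarith [hB y])
  rw [Real.dist_eq] at hd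
  have := (abs_lt.1 hd).2
  have := mul_lt_mul_of_pos_left hch hC
  linarith

/-- One-dimensional symmetry: a solution as in the De Giorgi setting depends on `x_n` only,
through a strictly increasing profile. -/
theorem one_dimensional_symmetry_whole_space
    (n : ℕ) (hn : 0 < n) (s : ℝ) (hs : s ∈ Set.Ioo (0 : ℝ) 1) (Cns : ℝ) (hCns : 0 < Cns)
    (f : ℝ → ℝ) (hfc : ContinuousOn f (Set.Icc (-1 : ℝ) 1))
    (hfmono : ∃ δ > (0 : ℝ), AntitoneOn f (Set.Icc (-1 : ℝ) (-1 + δ)) ∧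
      AntitoneOn f (Set.Icc (1 - δ) (1 : ℝ)))
    (u : Pt n → ℝ) (huL : MemL2s n s u) (huC : C11loc n u Set.univ)
    (heq : ∀ x : Pt n, HasFracLap n s Cns u x (f (u x)))
    (hub : ∀ x : Pt n, |u x| ≤ 1)
    (hlim : ∀ ε > (0 : ℝ), ∃ M > (0 : ℝ), ∀ x : Pt n,
      (M < x (lastIdx n hn) → |u x - 1| < ε) ∧ (x (lastIdx n hn) < -M → |u x + 1| < ε)) :
    ∃ g : ℝ → ℝ, StrictMono g ∧ ∀ x : Pt n, u x = g (x (lastIdx n hn)) := by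
  obtain ⟨δ, hδ, hf1, hf2⟩ := hfmono
  set i := lastIdx n hn with hi
  have huc : Continuous u := by
    rw [continuous_iff_continuousAt]
    intro x
    obtain ⟨ε, hε, -, hd, -⟩ := huC x (mem_univ x)
    exact (hd.differentiableAt (ball_mem_nhds x hε)).continuousAt
  have humem : ∀ x, u x ∈ Icc (-1 : ℝ) 1 := fun x => abs_le.1 (hub x)
  have hmono := mono_dir hn hs hCns f hfc u huc hub heq i hlim δ hδ hf1 hf2
  have hmono0 : ∀ h : Pt n, 0 ≤ h i → ∀ x, u x ≤ u (x + h) := by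
    intro h hh x
    have hcont : Continuous (fun t : ℝ => u (x + (h + t • EuclideanSpace.single i (1:ℝ)))) := by fun_prop
    have ht : Tendsto (fun t : ℝ => u (x + (h + t • EuclideanSpace.single i (1:ℝ)))) (𝓝[>] 0) (𝓝 (u (x + h))) := by
      have := (hcont.tendsto 0).mono_left (nhdsWithin_le_nhds (s := Ioi 0))
      simpa using this
    refine ge_of_tendsto ht ?_
    filter_upwards [self_mem_nhdsWithin] with t htt
    replace htt : 0 < t := htt
    apply hmono
    simp only [PiLp.add_apply, PiLp.smul_apply, EuclideanSpace.single_apply, smul_eq_mul, if_true]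
    linarith
  have hdep : ∀ x y : Pt n, x i ≤ y i → u x ≤ u y := by
    intro x y hxy
    have := hmono0 (y - x) (by simpa using hxy) x
    simpa using this
  refine ⟨fun t => u (EuclideanSpace.single i t), ?_, ?_⟩
  · intro a b hab
    have hle : u (EuclideanSpace.single i a) ≤ u (EuclideanSpace.single i b) :=
      hdep _ _ (by simpa using hab.le)
    refine lt_of_le_of_ne hle fun heqab => ?_
    set ν : Pt n := EuclideanSpace.single i (b - a) with hν
    have hνi : 0 < ν i := by simpa [hν] using hab
    have hνp : 0 < ‖ν‖ := lt_of_lt_of_le (lt_of_lt_of_le hνi (le_abs_self _)) (coord_le ν i)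
    obtain ⟨L, hL0, hL⟩ := hlim (1 / 2) (by norm_num)
    have hL1 : ∀ y : Pt n, L < y i → 1 / 2 ≤ u y := fun y hy => by
      have := abs_lt.1 ((hL y).1 hy); linarith
    have hL2 : ∀ y : Pt n, y i < -L → u y ≤ -(1 / 2) := fun y hy => by
      have := abs_lt.1 ((hL y).2 hy); linarith
    set x0 : Pt n := EuclideanSpace.single i a with hx0
    obtain ⟨η, hη, hchain⟩ := chain hn hs u huc hub i L hL1 hL2 ν hνi (|x0 i| + ‖ν‖ / 8)
    obtain ⟨θ, hθ, hfu⟩ := Metric.uniformContinuousOn_iff.1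
      (isCompact_Icc.uniformContinuousOn_of_continuous hfc) (Cns * η / 2) (by positivity)
    obtain ⟨C1, hC1, key⟩ := pert_max hn hs hCns f u huc hub heq (ρ := ‖ν‖ / 8) (by positivity)
    set ε : ℝ := min θ (Cns * η / 2 / C1) with hε
    have hε0 : 0 < ε := by positivity
    have hε1 : ε ≤ θ := min_le_left _ _
    have hε2 : C1 * ε ≤ Cns * η / 2 := by
      calc C1 * ε ≤ C1 * (Cns * η / 2 / C1) := by gcongr; exact min_le_right _ _
        _ = _ := mul_div_cancel₀ _ hC1.ne'
    have hAle : ∀ y, u y - u (y + ν) ≤ 0 := fun y => by linarith [hmono ν hνi y]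
    have hsum : x0 + ν = EuclideanSpace.single i b := by
      ext j
      by_cases hj : j = i <;> simp [hx0, hν, hj]
    obtain ⟨y, hy1, hy2, hy3⟩ := key ν 0 ε x0 hε0 hAle (by
      have h7 : u x0 = u (EuclideanSpace.single i b) := heqab
      rw [hsum, h7]; linarith)
    have hyi : |y i| ≤ |x0 i| + ‖ν‖ / 8 := by
      have h1 := coord_le (y - x0) i
      simp only [PiLp.sub_apply] at h1
      have h2 : |y i| ≤ |y i - x0 i| + |x0 i| := by simpa using abs_add_le (y i - x0 i) (x0 i)
      linarith
    have hch := hchain 1 ⟨by norm_num, le_rfl⟩ y hyi 0 le_rfl (by simpa using hAle)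
    rw [one_smul] at hch
    have hd := hfu (u y) (humem y) (u (y + ν)) (humem _) (by
      rw [Real.dist_eq, abs_of_nonpos (hAle y)]; linarith)
    rw [Real.dist_eq] at hd
    have := (abs_lt.1 hd).2
    have := mul_lt_mul_of_pos_left hch hCns
    linarith
  · intro x
    apply le_antisymm <;> apply hdep <;> simp
end
end

section
/- Comparison for large translations: Let f : [−1, 1] → ℝ be continuous and suppose there exists δ > 0 such that f is nonincreasing on [−1, −1+δ] and nonincreasing on [1−δ, 1]. Let u ∈ L_{2s} ∩ C^{1,1}_loc(ℝ^n) satisfy (-Δ)^s u(x) = f(u(x)) for all x ∈ ℝ^n, |u(x)| ≤ 1 for all x ∈ ℝ^n, and u(x', x_n) → ±1 as x_n → ±∞, uniformly in x' ∈ ℝ^{n−1}. Then there exists T > 0 such that for every τ ≥ T and every x = (x', x_n) ∈ ℝ^n, u(x', x_n + τ) ≥ u(x', x_n). -/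
open MeasureTheory Filter Metric Set

noncomputable section

lemma ker_integrable (n : ℕ) (hn : 0 < n) (s : ℝ) (hs : s ∈ Set.Ioo (0 : ℝ) 1) :
    Integrable (fun h : Pt n => min (‖h‖ ^ 2) 1 / ‖h‖ ^ ((n : ℝ) + 2 * s)) volume := by
  haveI : Nonempty (Fin n) := ⟨⟨0, hn⟩⟩
  haveI : Nontrivial (Pt n) := inferInstance
  have key := (integrable_fun_norm_addHaar (E := Pt n) (volume : Measure (Pt n))
    (f := fun r : ℝ => min (r ^ 2) 1 / r ^ ((n : ℝ) + 2 * s))).2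
  refine key ?_
  rw [finrank_euclideanSpace, Fintype.card_fin]
  have hsplit : Ioi (0 : ℝ) = Ioc 0 1 ∪ Ioi 1 := by
    rw [Ioc_union_Ioi_eq_Ioi zero_le_one]
  rw [hsplit, integrableOn_union]
  have hpow : ∀ y : ℝ, 0 < y → y ^ (n - 1) = y ^ ((n : ℝ) - 1) := by
    intro y hy
    rw [← Real.rpow_natCast, Nat.cast_sub hn, Nat.cast_one]
  constructor
  · have h1 : IntegrableOn (fun y : ℝ => y ^ (1 - 2 * s)) (Ioc 0 1) := by
      rw [← intervalIntegrable_iff_integrableOn_Ioc_of_le zero_le_one]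
      exact intervalIntegral.intervalIntegrable_rpow' (by linarith [hs.2])
    refine h1.congr_fun ?_ measurableSet_Ioc
    intro y hy
    have hy0 : 0 < y := hy.1
    have : min (y ^ 2) 1 = y ^ (2 : ℝ) := by
      rw [min_eq_left]
      · norm_cast
      · exact pow_le_one₀ hy0.le hy.2
    simp only [smul_eq_mul]
    rw [this, hpow y hy0, ← Real.rpow_sub hy0, ← Real.rpow_add hy0]
    congr 1; ring
  · have h1 : IntegrableOn (fun y : ℝ => y ^ (-1 - 2 * s)) (Ioi 1) :=
      integrableOn_Ioi_rpow_of_lt (by linarith [hs.1]) one_pos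
    refine h1.congr_fun ?_ measurableSet_Ioi
    intro y hy
    have hy1 : (1 : ℝ) < y := hy
    have hy0 : 0 < y := by linarith
    have : min (y ^ 2) 1 = y ^ (0 : ℝ) := by
      rw [min_eq_right, Real.rpow_zero]
      exact one_le_pow₀ hy1.le
    simp only [smul_eq_mul]
    rw [this, hpow y hy0, ← Real.rpow_sub hy0, ← Real.rpow_add hy0]
    congr 1; ring

lemma measSet (n : ℕ) (ε : ℝ) : MeasurableSet {h : Pt n | ε ≤ ‖h‖} :=
  measurableSet_le measurable_const measurable_norm

lemma diff_integrable (n : ℕ) (hn : 0 < n) (s : ℝ) (hs : s ∈ Set.Ioo (0 : ℝ) 1)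
    (w : Pt n → ℝ) (hw : Continuous w) (B : ℝ) (hB : ∀ x, |w x| ≤ B) (z : Pt n)
    (ε : ℝ) (hε : 0 < ε) :
    IntegrableOn (fun h : Pt n => (w z - w (z + h)) / ‖h‖ ^ ((n : ℝ) + 2 * s))
      {h : Pt n | ε ≤ ‖h‖} := by
  have hK := ker_integrable n hn s hs
  have hm : 0 < min (ε ^ 2) 1 := lt_min (by positivity) one_pos
  have hB0 : 0 ≤ B := (abs_nonneg _).trans (hB z)
  refine Integrable.mono' ((hK.const_mul (2 * B / min (ε ^ 2) 1)).integrableOn) ?_ ?_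
  · apply Measurable.aestronglyMeasurable
    have := hw.measurable
    fun_prop
  · rw [ae_restrict_iff' (measSet n ε)]
    refine Eventually.of_forall fun h hh => ?_
    have hh' : ε ≤ ‖h‖ := hh
    have hp : 0 < ‖h‖ ^ ((n : ℝ) + 2 * s) := Real.rpow_pos_of_pos (by linarith) _
    rw [Real.norm_eq_abs, abs_div, abs_of_pos hp, ← mul_div_assoc]
    apply div_le_div_of_nonneg_right _ hp.le
    have h1 : |w z - w (z + h)| ≤ 2 * B := by
      have := abs_sub (w z) (w (z + h))
      linarith [hB z, hB (z + h)]
    have h2 : min (ε ^ 2) 1 ≤ min (‖h‖ ^ 2) 1 :=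
      min_le_min_right _ (by gcongr)
    rw [div_mul_eq_mul_div, le_div_iff₀ hm]
    exact mul_le_mul h1 h2 hm.le (by linarith)

lemma trunc_eq (n : ℕ) (s : ℝ) (w : Pt n → ℝ) (z : Pt n) (ε : ℝ) :
    ∫ y in {y : Pt n | ε ≤ dist z y}, (w z - w y) / dist z y ^ ((n : ℝ) + 2 * s) =
    ∫ h in {h : Pt n | ε ≤ ‖h‖}, (w z - w (z + h)) / ‖h‖ ^ ((n : ℝ) + 2 * s) := by
  have hm : MeasurableSet {y : Pt n | ε ≤ dist z y} :=
    measurableSet_le measurable_const (by fun_prop)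
  rw [← integral_indicator hm, ← integral_indicator (measSet n ε),
    ← integral_add_left_eq_self _ z]
  congr 1
  ext h
  simp [indicator, dist_eq_norm]

lemma lower_bound (n : ℕ) (hn : 0 < n) (s : ℝ) (hs : s ∈ Set.Ioo (0 : ℝ) 1)
    (Cns : ℝ) (hCns : 0 < Cns)
    (w : Pt n → ℝ) (hw : Continuous w) (B : ℝ) (hB : ∀ x, |w x| ≤ B) (z : Pt n) (L : ℝ)
    (hL : HasFracLap n s Cns w z L) (hL0 : L ≤ 0) (S : Set (Pt n)) (hS : MeasurableSet S)
    (hS1 : ∀ h ∈ S, 1 ≤ ‖h‖) (a b : ℝ) (ha : 0 ≤ a) (hb : 0 ≤ b)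
    (hlow : ∀ h, S.indicator (fun _ => a) h - b * min (‖h‖ ^ 2) 1 ≤
      2 * w z - w (z + h) - w (z - h)) :
    a * ∫ h in S, min (‖h‖ ^ 2) 1 / ‖h‖ ^ ((n : ℝ) + 2 * s) ≤
      b * ∫ h : Pt n, min (‖h‖ ^ 2) 1 / ‖h‖ ^ ((n : ℝ) + 2 * s) := by
  have hK := ker_integrable n hn s hs
  set G : Pt n → ℝ := fun h => min (‖h‖ ^ 2) 1 / ‖h‖ ^ ((n : ℝ) + 2 * s) with hG
  have hG0 : ∀ h, 0 ≤ G h := fun h => by simp only [hG]; positivity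
  by_contra hcon
  push Not at hcon
  set D : ℝ := (a * ∫ h in S, G h) - b * ∫ h, G h with hD
  have hD0 : 0 < D := by linarith
  have hev : ∀ᶠ ε in nhdsWithin (0 : ℝ) (Ioi 0), Cns * (D / 2) ≤
      Cns * ∫ y in {y : Pt n | ε ≤ dist z y}, (w z - w y) / dist z y ^ ((n : ℝ) + 2 * s) := by
    have : Ioo (0 : ℝ) 1 ∈ nhdsWithin (0 : ℝ) (Ioi 0) := Ioo_mem_nhdsGT one_pos
    filter_upwards [this] with ε hε
    apply mul_le_mul_of_nonneg_left _ hCns.le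
    rw [trunc_eq]
    set P : Pt n → ℝ := fun h => (w z - w (z + h)) / ‖h‖ ^ ((n : ℝ) + 2 * s) with hP
    set E : Set (Pt n) := {h : Pt n | ε ≤ ‖h‖} with hE
    have hEm : MeasurableSet E := measSet n ε
    have hPi : IntegrableOn P E := diff_integrable n hn s hs w hw B hB z ε hε.1
    have hind : ∀ h, E.indicator (fun h => P (-h)) h = E.indicator P (-h) := by
      intro h; simp [indicator, hE]
    have hPn : ∫ h in E, P (-h) = ∫ h in E, P h := by
      rw [← integral_indicator hEm, ← integral_indicator hEm,
        ← integral_neg_eq_self (E.indicator P)]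
      simp only [hind]
    have hPni : IntegrableOn (fun h => P (-h)) E := by
      rw [← integrable_indicator_iff hEm]
      have h2 := ((integrable_indicator_iff hEm).2 hPi).comp_neg
      exact h2.congr (Eventually.of_forall fun h => (hind h).symm)
    have hSE : S ⊆ E := fun h hh => (hε.2.le).trans (hS1 h hh)
    have hsum : ∫ h in E, (P h + P (-h)) = 2 * ∫ h in E, P h := by
      rw [integral_add hPi hPni, hPn]; ring
    have hSi : Integrable (fun h => a * S.indicator G h) := (hK.indicator hS).const_mul a
    have hbi : Integrable (fun h => b * G h) := hK.const_mul b
    have hle : ∫ h in E, (a * S.indicator G h - b * G h) ≤ ∫ h in E, (P h + P (-h)) := by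
      refine setIntegral_mono_on (hSi.sub hbi).integrableOn (hPi.add hPni) hEm ?_
      intro h hh
      have hh' : ε ≤ ‖h‖ := hh
      have hp : 0 < ‖h‖ ^ ((n : ℝ) + 2 * s) := Real.rpow_pos_of_pos (by linarith [hε.1]) _
      have h1 : P h + P (-h) = (2 * w z - w (z + h) - w (z - h)) / ‖h‖ ^ ((n : ℝ) + 2 * s) := by
        simp only [hP, norm_neg, ← sub_eq_add_neg]
        rw [← add_div]; congr 1; ring
      have h2 : a * S.indicator G h - b * G h =
          (S.indicator (fun _ => a) h - b * min (‖h‖ ^ 2) 1) / ‖h‖ ^ ((n : ℝ) + 2 * s) := by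
        by_cases hhS : h ∈ S
        · have : min (‖h‖ ^ 2) 1 = 1 := min_eq_right (one_le_pow₀ (hS1 h hhS))
          simp only [indicator_of_mem hhS, hG, this]; ring
        · simp only [indicator_of_notMem hhS, hG]; ring
      rw [h1, h2]
      exact div_le_div_of_nonneg_right (hlow h) hp.le
    have h3 : ∫ h in E, (a * S.indicator G h - b * G h) =
        (a * ∫ h in S, G h) - b * ∫ h in E, G h := by
      rw [integral_sub hSi.integrableOn hbi.integrableOn, integral_const_mul, integral_const_mul,
        setIntegral_indicator hS, inter_eq_right.2 hSE]
    have h4 : ∫ h in E, G h ≤ ∫ h, G h :=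
      setIntegral_le_integral hK (Eventually.of_forall hG0)
    have h5 := mul_le_mul_of_nonneg_left h4 hb
    linarith
  have := ge_of_tendsto hL hev
  have h6 : 0 < Cns * (D / 2) := by positivity
  linarith

lemma fracLap_sub (n : ℕ) (hn : 0 < n) (s : ℝ) (hs : s ∈ Set.Ioo (0 : ℝ) 1)
    (Cns : ℝ) (u : Pt n → ℝ) (hu : Continuous u) (B : ℝ) (hB : ∀ x, |u x| ≤ B) (z e : Pt n)
    (L L' : ℝ) (hL : HasFracLap n s Cns u z L) (hL' : HasFracLap n s Cns u (z + e) L') :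
    HasFracLap n s Cns (fun x => u x - u (x + e)) z (L - L') := by
  unfold HasFracLap at *
  refine (hL.sub hL').congr' ?_
  filter_upwards [self_mem_nhdsWithin] with ε hε
  rw [trunc_eq, trunc_eq, trunc_eq n s (fun x => u x - u (x + e)), ← mul_sub, ← integral_sub
    (diff_integrable n hn s hs u hu B hB z ε hε) (diff_integrable n hn s hs u hu B hB _ ε hε)]
  congr 2
  ext h
  rw [← sub_div]
  congr 1
  rw [add_right_comm z e h]; ring

lemma choose_eps (A c K : ℝ) (hA0 : 0 < A) (hc0 : 0 < c) (hK0 : 0 ≤ K) :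
    ∃ ε > 0, ε < A / 4 ∧ 2 * ε * K < A / 4 * c := by
  have hAc : 0 < A * c := by positivity
  refine ⟨min (A / 8) (A * c / (16 * (K + 1))), by positivity, ?_, ?_⟩
  · exact (min_le_left _ _).trans_lt (by linarith)
  · have h1 : min (A / 8) (A * c / (16 * (K + 1))) * (16 * (K + 1)) ≤ A * c := by
      rw [← le_div_iff₀ (by positivity)]; exact min_le_right _ _
    have h2 : 0 < min (A / 8) (A * c / (16 * (K + 1))) := by positivity
    nlinarith

set_option maxHeartbeats 1000000 in
lemma max_principle (n : ℕ) (hn : 0 < n) (s : ℝ) (hs : s ∈ Set.Ioo (0 : ℝ) 1)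
    (Cns : ℝ) (hCns : 0 < Cns)
    (w : Pt n → ℝ) (hw : Continuous w) (B : ℝ) (hB : ∀ x, |w x| ≤ B)
    (hL : ∀ z, 0 < w z → ∃ L ≤ 0, HasFracLap n s Cns w z L)
    (hlim : ∀ ε > (0 : ℝ), ∃ M > (0 : ℝ), ∀ x : Pt n,
      (M < x (lastIdx n hn) → w x < ε) ∧ (x (lastIdx n hn) < -M → w x < ε)) :
    ∀ x, w x ≤ 0 := by
  by_contra hcon
  push Not at hcon
  obtain ⟨x0, hx0⟩ := hcon
  have hbdd : BddAbove (range w) := ⟨B, by rintro _ ⟨x, rfl⟩; exact (abs_le.1 (hB x)).2⟩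
  set A := sSup (range w) with hA
  have hwA : ∀ x, w x ≤ A := fun x => le_csSup hbdd ⟨x, rfl⟩
  have hA0 : 0 < A := hx0.trans_le (hwA x0)
  obtain ⟨N, hN0, hN⟩ := hlim (A / 2) (by linarith)
  set R : ℝ := 2 * N + 2 with hR
  set S : Set (Pt n) := ball (R • eN n hn) 1 with hS
  have hnorm : ‖R • eN n hn‖ = R := by
    rw [norm_smul, eN, EuclideanSpace.norm_single]; simp; linarith
  have hS1 : ∀ h ∈ S, 1 ≤ ‖h‖ := by
    intro h hh
    rw [hS, mem_ball, dist_eq_norm] at hh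
    have := norm_sub_norm_le (R • eN n hn) h
    rw [norm_sub_rev, hnorm] at this
    linarith
  have hK := ker_integrable n hn s hs
  set K := ∫ h : Pt n, min (‖h‖ ^ 2) 1 / ‖h‖ ^ ((n : ℝ) + 2 * s) with hKdef
  set c := ∫ h in S, min (‖h‖ ^ 2) 1 / ‖h‖ ^ ((n : ℝ) + 2 * s) with hcdef
  have hK0 : 0 ≤ K := integral_nonneg fun h => by positivity
  have hc0 : 0 < c := by
    rw [hcdef, setIntegral_pos_iff_support_of_nonneg_ae
      (Eventually.of_forall fun h => by simp only [Pi.zero_apply]; positivity) hK.integrableOn]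
    have : S ⊆ Function.support
        (fun h : Pt n => min (‖h‖ ^ 2) 1 / ‖h‖ ^ ((n : ℝ) + 2 * s)) := by
      intro h hh
      have h1 := hS1 h hh
      have : 0 < ‖h‖ := by linarith
      have : 0 < min (‖h‖ ^ 2) 1 / ‖h‖ ^ ((n : ℝ) + 2 * s) := by positivity
      exact this.ne'
    rw [inter_eq_right.2 this]
    exact measure_ball_pos _ _ one_pos
  -- choose the perturbation size
  obtain ⟨ε, hε0, hεA, hεc⟩ : ∃ ε > 0, ε < A / 4 ∧ 2 * ε * K < A / 4 * c := choose_eps A c K hA0 hc0 hK0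
  obtain ⟨_, ⟨x, rfl⟩, hx⟩ := exists_lt_of_lt_csSup (range_nonempty w) (show A - ε < A by linarith)
  set ψ : Pt n → ℝ := fun y => max (1 - ‖y - x‖ ^ 2) 0 with hψ
  have hψc : Continuous ψ := by simp only [hψ]; fun_prop
  obtain ⟨z, -, hz⟩ := (isCompact_closedBall x 1).exists_isMaxOn
    ⟨x, mem_closedBall_self zero_le_one⟩ (hw.add (hψc.const_mul ε)).continuousOn
  have hzx : w x + ε ≤ w z + ε * ψ z := by
    have := hz (mem_closedBall_self zero_le_one)
    simpa [hψ] using this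
  have hmax : ∀ y, w y + ε * ψ y ≤ w z + ε * ψ z := by
    intro y
    by_cases hy : y ∈ closedBall x 1
    · exact hz hy
    · have : 1 < ‖y - x‖ := by simpa [dist_eq_norm] using hy
      have : ψ y = 0 := by
        simp only [hψ]; apply max_eq_right
        have := one_lt_pow₀ this (n := 2) (by norm_num)
        linarith
      rw [this]
      linarith [hwA y]
  have hψ1 : ∀ y, ψ y ≤ 1 := fun y => max_le (by nlinarith [sq_nonneg ‖y - x‖]) zero_le_one
  have hψ0 : ∀ y, 0 ≤ ψ y := fun y => le_max_right _ _
  have hψ2 : ∀ y h, 2 * ψ y - ψ (y + h) - ψ (y - h) ≤ 2 * min (‖h‖ ^ 2) 1 := by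
    intro y h
    rw [mul_min_of_nonneg _ _ (by norm_num : (0:ℝ) ≤ 2)]
    apply le_min
    · rcases le_total (1 - ‖y - x‖ ^ 2) 0 with h0 | h0
      · have : ψ y = 0 := max_eq_right h0
        nlinarith [hψ0 (y + h), hψ0 (y - h), sq_nonneg ‖h‖]
      · have h1 : ψ y = 1 - ‖y - x‖ ^ 2 := max_eq_left h0
        have h2 : 1 - ‖y + h - x‖ ^ 2 ≤ ψ (y + h) := le_max_left _ _
        have h3 : 1 - ‖y - h - x‖ ^ 2 ≤ ψ (y - h) := le_max_left _ _
        have h4 := parallelogram_law_with_norm ℝ (y - x) h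
        rw [show y + h - x = y - x + h by abel] at h2
        rw [show y - h - x = y - x - h by abel] at h3
        nlinarith
    · linarith [hψ1 y, hψ0 (y + h), hψ0 (y - h)]
  have hwz : A - ε < w z := by nlinarith [hψ1 z]
  have hwz2 : A / 2 < w z := by linarith
  have hzN : -N ≤ z (lastIdx n hn) := by
    by_contra hlt
    push Not at hlt
    linarith [(hN z).2 hlt]
  obtain ⟨L, hL0, hLz⟩ := hL z (by linarith)
  have hfin := lower_bound n hn s hs Cns hCns w hw B hB z L hLz hL0 S measurableSet_ball hS1
    (A / 4) (2 * ε) (by linarith) (by linarith) ?_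
  · rw [← hKdef, ← hcdef] at hfin
    linarith
  · intro h
    by_cases hh : h ∈ S
    · have hm : min (‖h‖ ^ 2) 1 = 1 := min_eq_right (one_le_pow₀ (hS1 h hh))
      rw [indicator_of_mem hh, hm]
      have hcoord : R - 1 < h (lastIdx n hn) := by
        rw [hS, mem_ball, dist_eq_norm] at hh
        have h1 := (PiLp.norm_apply_le (h - R • eN n hn) (lastIdx n hn)).trans_lt hh
        have h2 : (h - R • eN n hn) (lastIdx n hn) = h (lastIdx n hn) - R := by
          simp [eN]
        rw [h2, Real.norm_eq_abs] at h1
        linarith [(abs_lt.1 h1).1]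
      have h3 : w (z + h) < A / 2 := (hN (z + h)).1 (by
        rw [PiLp.add_apply]; linarith)
      linarith [hwA (z - h)]
    · rw [indicator_of_notMem hh]
      nlinarith [hmax (z + h), hmax (z - h), hψ2 z h]

/-- Comparison for large translations in the `x_n` direction. -/
theorem comparison_large_translations
    (n : ℕ) (hn : 0 < n) (s : ℝ) (hs : s ∈ Set.Ioo (0 : ℝ) 1) (Cns : ℝ) (hCns : 0 < Cns)
    (f : ℝ → ℝ) (hfc : ContinuousOn f (Set.Icc (-1 : ℝ) 1))
    (hfmono : ∃ δ > (0 : ℝ), AntitoneOn f (Set.Icc (-1 : ℝ) (-1 + δ)) ∧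
      AntitoneOn f (Set.Icc (1 - δ) (1 : ℝ)))
    (u : Pt n → ℝ) (huL : MemL2s n s u) (huC : C11loc n u Set.univ)
    (heq : ∀ x : Pt n, HasFracLap n s Cns u x (f (u x)))
    (hub : ∀ x : Pt n, |u x| ≤ 1)
    (hlim : ∀ ε > (0 : ℝ), ∃ M > (0 : ℝ), ∀ x : Pt n,
      (M < x (lastIdx n hn) → |u x - 1| < ε) ∧ (x (lastIdx n hn) < -M → |u x + 1| < ε)) :
    ∃ T : ℝ, 0 < T ∧ ∀ τ : ℝ, T ≤ τ → ∀ x : Pt n, u x ≤ u (x + τ • eN n hn) := by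
  have hcont : Continuous u := by
    rw [continuous_iff_continuousAt]
    intro x
    obtain ⟨ε, hε, -, hd, -⟩ := huC x (mem_univ x)
    exact (hd.differentiableAt (ball_mem_nhds x hε)).continuousAt
  obtain ⟨δ, hδ, hf1, hf2⟩ := hfmono
  obtain ⟨M, hM0, hM⟩ := hlim δ hδ
  refine ⟨2 * M + 1, by linarith, ?_⟩
  intro τ hτ
  have hco : ∀ x : Pt n, (x + τ • eN n hn) (lastIdx n hn) = x (lastIdx n hn) + τ := by
    intro x; simp [eN]
  have hmp := max_principle n hn s hs Cns hCns (fun x => u x - u (x + τ • eN n hn))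
    (by fun_prop) 2 ?_ ?_ ?_
  · intro x
    have := hmp x
    linarith
  · intro x
    have := abs_sub (u x) (u (x + τ • eN n hn))
    linarith [hub x, hub (x + τ • eN n hn)]
  · intro z hz
    refine ⟨_, ?_, fracLap_sub n hn s hs Cns u hcont 1 hub z (τ • eN n hn) _ _ (heq z) (heq _)⟩
    have hz' : u (z + τ • eN n hn) < u z := by linarith
    have hb1 := abs_le.1 (hub z)
    have hb2 := abs_le.1 (hub (z + τ • eN n hn))
    rw [sub_nonpos]
    by_cases hzM : z (lastIdx n hn) < -M
    · have h1 := abs_lt.1 ((hM z).2 hzM)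
      exact hf1 ⟨hb2.1, by linarith⟩ ⟨hb1.1, by linarith⟩ hz'.le
    · have h1 := abs_lt.1 ((hM (z + τ • eN n hn)).1 (by rw [hco]; linarith))
      exact hf2 ⟨by linarith, hb2.2⟩ ⟨by linarith, hb1.2⟩ hz'.le
  · intro ε hε
    obtain ⟨N, hN0, hN⟩ := hlim (ε / 2) (by linarith)
    refine ⟨N + τ, by linarith, fun x => ⟨fun hx => ?_, fun hx => ?_⟩⟩
    · have h1 := abs_lt.1 ((hN x).1 (by linarith))
      have h2 := abs_lt.1 ((hN (x + τ • eN n hn)).1 (by rw [hco]; linarith))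
      linarith
    · have h1 := abs_lt.1 ((hN x).2 (by linarith))
      have h2 := abs_lt.1 ((hN (x + τ • eN n hn)).2 (by rw [hco]; linarith))
      linarith
end
end
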